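/- arXiv:0709.1129 — 6 statements merged into one kernel-verified Lean document; each statement's English description precedes it below -/
import Mathlib

section
/- Let n ≥ 1 and let U be a nonempty bounded open subset of ℝⁿ with the property that for every point x in the frontier of U and every r > 0 there is a connected component of U entirely contained in the open ball of center x and radius r. Then U has infinitely many connected components. -/
/-!
By connectedness of `ℝⁿ`, the set `U` is not closed, so some frontier point `x` lies outside `U`.
Hence no component `K` of `U` is contained in every neighbourhood of `x`: some neighbourhood `V K`
of `x` fails to contain `K`. If there were only finitely many components, the intersection of the
`V K` would be a neighbourhood of `x` containing no component of `U`.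
-/

open Filter Set Topology

theorem infinite_of_forall_mem_filter_exists_subset {α : Type*} {l : Filter α} {S : Set (Set α)}
    (hker : ∀ s ∈ S, ¬ s ⊆ l.ker) (hsmall : ∀ t ∈ l, ∃ s ∈ S, s ⊆ t) : S.Infinite := by
  intro hfin
  have havoid : ∀ s ∈ S, ∃ t ∈ l, ¬ s ⊆ t := fun s hs ↦ by
    simpa only [subset_ker, not_forall, exists_prop] using hker s hs
  choose! V hVl hV using havoid
  obtain ⟨s, hs, hsV⟩ := hsmall (⋂ s ∈ S, V s) ((biInter_mem hfin).2 hVl)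
  exact hV s hs (hsV.trans (biInter_subset_of_mem hs))

theorem infinite_connectedComponentIn_of_forall_mem_nhds {X : Type*} [TopologicalSpace X]
    [T1Space X] {U : Set X} {x : X} (hx : x ∉ U)
    (hsmall : ∀ V ∈ 𝓝 x, ∃ y ∈ U, connectedComponentIn U y ⊆ V) :
    {K : Set X | ∃ y ∈ U, K = connectedComponentIn U y}.Infinite := by
  refine infinite_of_forall_mem_filter_exists_subset (l := 𝓝 x) ?_ fun V hV ↦ ?_
  · rintro _ ⟨y, hy, rfl⟩ hsub
    have hyx : y = x := (hsub.trans (ker_nhds x).subset) (mem_connectedComponentIn hy)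
    exact hx (hyx ▸ hy)
  · obtain ⟨y, hy, hyV⟩ := hsmall V hV
    exact ⟨_, ⟨y, hy, rfl⟩, hyV⟩

theorem not_isClosed_of_isOpen_of_isBounded {X : Type*} [TopologicalSpace X] [PreconnectedSpace X]
    [Bornology X] [(Bornology.cobounded X).NeBot] {U : Set X} (hopen : IsOpen U)
    (hne : U.Nonempty) (hbdd : Bornology.IsBounded U) : ¬ IsClosed U := by
  intro hclosed
  have huniv : U = univ := IsClopen.eq_univ ⟨hclosed, hopen⟩ hne
  have hbounded : BoundedSpace X := Bornology.isBounded_univ.1 (huniv ▸ hbdd)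
  exact ‹(Bornology.cobounded X).NeBot›.ne (Bornology.cobounded_eq_bot_iff.2 hbounded)

theorem stmt_0_general {X : Type*} [TopologicalSpace X] [T1Space X] {U : Set X}
    (hU : ¬ IsClosed U)
    (h : ∀ x ∈ frontier U, ∀ V ∈ 𝓝 x, ∃ y ∈ U, connectedComponentIn U y ⊆ V) :
    {K : Set X | ∃ y ∈ U, K = connectedComponentIn U y}.Infinite := by
  obtain ⟨x, hx, hxU⟩ := not_subset.1 (mt frontier_subset_iff_isClosed.1 hU)
  exact infinite_connectedComponentIn_of_forall_mem_nhds hxU (h x hx)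

/-- A nonempty bounded open set in ℝⁿ (n ≥ 1), each point of whose frontier has
connected components of `U` in arbitrarily small balls around it, has infinitely
many connected components. -/
theorem stmt_0 (n : ℕ) (hn : 1 ≤ n) (U : Set (EuclideanSpace ℝ (Fin n)))
    (hUopen : IsOpen U) (hUne : U.Nonempty) (hUbdd : Bornology.IsBounded U)
    (h : ∀ x ∈ frontier U, ∀ r > 0,
      ∃ y ∈ U, connectedComponentIn U y ⊆ Metric.ball x r) :
    {K : Set (EuclideanSpace ℝ (Fin n)) | ∃ y ∈ U, K = connectedComponentIn U y}.Infinite := by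
  have : Nonempty (Fin n) := ⟨⟨0, hn⟩⟩
  refine stmt_0_general (not_isClosed_of_isOpen_of_isBounded hUopen hUne hUbdd) fun x hx V hV ↦ ?_
  obtain ⟨r, hr, hrV⟩ := Metric.mem_nhds_iff.1 hV
  exact (h x hx r hr).imp fun _ ⟨hy, hyr⟩ ↦ ⟨hy, hyr.trans hrV⟩
end

section
/- Let n ≥ 2 and let E ⊆ ℝⁿ be a compact totally disconnected set. Then the complement ℝⁿ \ E is a connected set. -/
/-!
Suppose the complement of a compact plane set `K` splits into disjoint open sets `U ∋ p` and
`V ∋ q`, and `(z - p) / (z - q)` has a continuous logarithm on `K`. Extend that logarithm to a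
continuous `G : ℂ → ℂ`. Since `∂U ⊆ K`, the function equal to `exp G * (z - q)` on `U` and to
`z - p` off `U` is continuous and never zero on `ℂ`, hence has a continuous logarithm. So `z - q`
has one on `U` and `z - p` has one on `V`. But a large circle around `K`, `p` and `q` is connected,
so it lies in `U` or in `V`, and neither function has a continuous logarithm on it.

On a compact totally disconnected `K` every nonvanishing continuous function has a continuous
logarithm, which settles the plane. In higher dimension, join two points of the complement inside
a plane through them.
-/

open Set Metric Complex Topology

/-- `f` has a continuous logarithm: it lifts to a continuous map through `exp : ℂ → ℂ`. In
particular `f` is continuous and never zero. For a function on a subset, `X` is the subtype. -/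
def HasContinuousLog {X : Type*} [TopologicalSpace X] (f : X → ℂ) : Prop :=
  ∃ g : X → ℂ, Continuous g ∧ ∀ x, exp (g x) = f x

section Topology

variable {X : Type*} [TopologicalSpace X] {s : Set X}

lemma exists_isOpen_disjoint_of_not_isPreconnected (hs : IsOpen s) (h : ¬ IsPreconnected s) :
    ∃ U V : Set X, IsOpen U ∧ IsOpen V ∧ Disjoint U V ∧ U ∪ V = s ∧ U.Nonempty ∧ V.Nonempty := by
  simp only [IsPreconnected, not_forall, not_nonempty_iff_eq_empty] at h
  obtain ⟨u, v, hu, hv, hsuv, hsu, hsv, hdisj⟩ := h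
  refine ⟨s ∩ u, s ∩ v, hs.inter hu, hs.inter hv, ?_, ?_, hsu, hsv⟩
  · rw [disjoint_iff_inter_eq_empty, ← inter_inter_distrib_left, hdisj]
  · rw [← inter_union_distrib_left, inter_eq_left.2 hsuv]

lemma nonempty_compl_of_isTotallyDisconnected [PreconnectedSpace X] [Nontrivial X]
    (hs : IsTotallyDisconnected s) : sᶜ.Nonempty :=
  nonempty_compl.2 fun huniv =>
    not_subsingleton_iff.2 nontrivial_univ (hs univ huniv.ge isPreconnected_univ)

end Topology

section HasContinuousLog

variable {X Y : Type*} [TopologicalSpace X] [TopologicalSpace Y] {f f' : X → ℂ}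

lemma hasContinuousLog_exp {g : X → ℂ} (hg : Continuous g) :
    HasContinuousLog fun x => exp (g x) :=
  ⟨g, hg, fun _ => rfl⟩

lemma HasContinuousLog.div (hf : HasContinuousLog f) (hf' : HasContinuousLog f') :
    HasContinuousLog fun x => f x / f' x := by
  obtain ⟨g, hg, hgf⟩ := hf
  obtain ⟨g', hg', hgf'⟩ := hf'
  exact ⟨fun x => g x - g' x, hg.sub hg', fun x => by rw [exp_sub, hgf, hgf']⟩

lemma HasContinuousLog.comp (hf : HasContinuousLog f) {φ : Y → X} (hφ : Continuous φ) :
    HasContinuousLog fun y => f (φ y) := by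
  obtain ⟨g, hg, hgf⟩ := hf
  exact ⟨g ∘ φ, hg.comp hφ, fun y => hgf (φ y)⟩

lemma hasContinuousLog_of_mem_slitPlane (hf : Continuous f) (h : ∀ x, f x ∈ slitPlane) :
    HasContinuousLog f :=
  ⟨fun x => log (f x), hf.clog h, fun x => exp_log (slitPlane_ne_zero (h x))⟩

lemma hasContinuousLog_of_simplyConnectedSpace [SimplyConnectedSpace X]
    [LocallyPathConnectedSpace X] (hf : Continuous f) (h0 : ∀ x, f x ≠ 0) :
    HasContinuousLog f := by
  obtain ⟨x₀⟩ : Nonempty X := inferInstance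
  obtain ⟨g, ⟨-, hg⟩, -⟩ :=
    isCoveringMapOn_exp.existsUnique_continuousMap_lifts ⟨f, hf⟩ (exp_log (h0 x₀)) h0
  exact ⟨g, g.continuous, congrFun hg⟩

/-- Two branches suffice: `log z` on the slit plane and `log (-z) + π i` on its negative. -/
lemma hasContinuousLog_of_totallyDisconnectedSpace [CompactSpace X] [T2Space X]
    [TotallyDisconnectedSpace X] (hf : Continuous f) (h0 : ∀ x, f x ≠ 0) :
    HasContinuousLog f := by
  classical
  obtain ⟨C, hC, hnegC, hCslit⟩ : ∃ C, IsClopen C ∧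
      ((fun x => -f x) ⁻¹' slitPlane)ᶜ ⊆ C ∧ C ⊆ f ⁻¹' slitPlane :=
    exists_clopen_of_closed_subset_open (isOpen_slitPlane.preimage hf.neg).isClosed_compl
      (isOpen_slitPlane.preimage hf)
      fun x hx => (mem_slitPlane_or_neg_mem_slitPlane (h0 x)).resolve_right hx
  have hCneg : ∀ x ∈ Cᶜ, -f x ∈ slitPlane := fun x hx => not_notMem.1 fun h => hx (hnegC h)
  have hlog : ContinuousOn (fun x => log (f x)) C := hf.continuousOn.clog hCslit
  have hlog_neg : ContinuousOn (fun x => log (-f x) + Real.pi * I) Cᶜ :=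
    (hf.neg.continuousOn.clog hCneg).add continuousOn_const
  refine ⟨C.piecewise (fun x => log (f x)) fun x => log (-f x) + Real.pi * I,
    continuous_piecewise (by simp [hC.frontier_eq]) (by rwa [hC.isClosed.closure_eq])
      (by rwa [hC.compl.isClosed.closure_eq]), fun x => ?_⟩
  by_cases hx : x ∈ C
  · rw [piecewise_eq_of_mem _ _ _ hx, exp_log (h0 x)]
  · rw [piecewise_eq_of_notMem _ _ _ hx, exp_add, exp_log (neg_ne_zero.2 (h0 x)), exp_pi_mul_I,
      mul_neg_one, neg_neg]

lemma HasContinuousLog.exists_extension [NormalSpace X] {K : Set X} (hK : IsClosed K)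
    {f : K → ℂ} (hf : HasContinuousLog f) :
    ∃ G : X → ℂ, Continuous G ∧ ∀ x : K, exp (G x) = f x := by
  obtain ⟨g, hg, hgf⟩ := hf
  obtain ⟨G, hG⟩ := ContinuousMap.exists_extension' hK.isClosedEmbedding_subtypeVal ⟨g, hg⟩
  exact ⟨G, G.continuous, fun x => (congrArg exp (congrFun hG x)).trans (hgf x)⟩

end HasContinuousLog

section Sphere

variable {c : ℂ} {r : ℝ}

/-- A logarithm of `z - c` along `θ ↦ c + r * exp (θ * I)` differs from `θ * I` by a constant, so it
does not return to its initial value after a full turn. -/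
lemma not_hasContinuousLog_sub_center_sphere (hr : 0 < r) :
    ¬ HasContinuousLog fun z : sphere c r => (z : ℂ) - c := by
  rintro ⟨L, hL, hexpL⟩
  let γ : ℝ → sphere c r := fun θ => ⟨circleMap c r θ, circleMap_mem_sphere c hr.le θ⟩
  have hγ : Continuous γ := (continuous_circleMap c r).subtype_mk _
  let φ : ℝ → ℂ := fun θ => L (γ θ) - θ * I
  have hφ : Continuous φ := by fun_prop
  have hexpφ (θ : ℝ) : exp (φ θ) = r := by
    have hexpLγ : exp (L (γ θ)) = circleMap c r θ - c := hexpL (γ θ)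
    rw [exp_sub, hexpLγ, circleMap_sub_center, circleMap_zero,
      mul_div_cancel_right₀ _ (exp_ne_zero _)]
  have hconst : φ = fun _ => φ 0 :=
    isCoveringMap_exp.eq_of_comp_eq hφ continuous_const
      (funext fun θ => Subtype.ext ((hexpφ θ).trans (hexpφ 0).symm)) 0 rfl
  have hperiod : γ (2 * Real.pi) = γ 0 := Subtype.ext (by simp [γ, circleMap])
  have hturn : φ (2 * Real.pi) = φ 0 := congrFun hconst _
  simp [φ, hperiod, Real.pi_ne_zero] at hturn

lemma hasContinuousLog_sub_div_sub_center_sphere {p : ℂ} (hp : p ∈ ball c r) :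
    HasContinuousLog fun z : sphere c r => ((z : ℂ) - p) / (z - c) := by
  have hne (z : sphere c r) : (z : ℂ) - c ≠ 0 :=
    sub_ne_zero.2 (ne_of_mem_sphere z.2 (pos_of_mem_ball hp).ne')
  refine hasContinuousLog_of_mem_slitPlane (by fun_prop (disch := exact hne _)) fun z => ?_
  have hnorm : ‖(c - p) / (z - c)‖ < 1 := by
    rw [norm_div, mem_sphere_iff_norm.1 z.2, div_lt_one (pos_of_mem_ball hp)]
    exact mem_ball_iff_norm'.1 hp
  convert mem_slitPlane_of_norm_lt_one hnorm using 1
  field_simp [hne z]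
  ring

lemma not_hasContinuousLog_sub_sphere {p : ℂ} (hp : p ∈ ball c r) :
    ¬ HasContinuousLog fun z : sphere c r => (z : ℂ) - p := by
  intro hlog
  refine not_hasContinuousLog_sub_center_sphere (c := c) (pos_of_mem_ball hp) ?_
  convert hlog.div (hasContinuousLog_sub_div_sub_center_sphere hp) using 2 with z
  have hzp : (z : ℂ) - p ≠ 0 :=
    sub_ne_zero.2 fun h => sphere_disjoint_ball.ne_of_mem z.2 hp h
  rw [div_div_cancel₀ hzp]

end Sphere

section Plane

variable {K : Set ℂ}

lemma HasContinuousLog.sub_of_isOpen_of_disjoint {U V : Set ℂ} {p q : ℂ} (hU : IsOpen U)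
    (hV : IsOpen V) (hUV : Disjoint U V) (hp : p ∈ U) (hq : q ∈ V)
    (hlog : HasContinuousLog fun z : ↥(U ∪ V)ᶜ => ((z : ℂ) - p) / (z - q)) :
    (HasContinuousLog fun z : U => (z : ℂ) - q) ∧ HasContinuousLog fun z : V => (z : ℂ) - p := by
  classical
  obtain ⟨G, hG, hexpG⟩ := hlog.exists_extension (hU.union hV).isClosed_compl
  have hfrontier : frontier U ⊆ (U ∪ V)ᶜ := by
    rw [compl_union]
    exact subset_inter (disjoint_frontier_iff_isOpen.2 hU).subset_compl_right
      (hUV.frontier_left hV).subset_compl_right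
  let H : ℂ → ℂ := U.piecewise (fun z => exp (G z) * (z - q)) fun z => z - p
  have hH : Continuous H := by
    refine Continuous.piecewise (fun z hz => ?_) (by fun_prop) (by fun_prop)
    have hzq : z ≠ q := fun h => hfrontier hz (.inr (h ▸ hq))
    rw [hexpG ⟨z, hfrontier hz⟩, div_mul_cancel₀ _ (sub_ne_zero.2 hzq)]
  have hHU (z : U) : H z = exp (G z) * (z - q) := piecewise_eq_of_mem _ _ _ z.2
  have hHV (z : V) : H z = z - p :=
    piecewise_eq_of_notMem _ _ _ (hUV.notMem_of_mem_right z.2)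
  have hH0 (z : ℂ) : H z ≠ 0 := by
    by_cases hz : z ∈ U
    · rw [hHU ⟨z, hz⟩]
      exact mul_ne_zero (exp_ne_zero _) (sub_ne_zero.2 (hUV.ne_of_mem hz hq))
    · simpa only [H, piecewise_eq_of_notMem _ _ _ hz] using
        sub_ne_zero.2 fun h : z = p => hz (h ▸ hp)
  have hlogH : HasContinuousLog H := hasContinuousLog_of_simplyConnectedSpace hH hH0
  constructor
  · convert (hlogH.comp continuous_subtype_val).div
      (hasContinuousLog_exp (hG.comp (continuous_subtype_val (p := (· ∈ U))))) using 2 with z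
    rw [hHU, Function.comp_apply, mul_div_cancel_left₀ _ (exp_ne_zero _)]
  · simpa only [hHV] using hlogH.comp (continuous_subtype_val (p := (· ∈ V)))

/-- The sufficiency half of **Eilenberg's criterion**. -/
theorem isPreconnected_compl_of_hasContinuousLog (hK : IsCompact K)
    (hlog : ∀ p ∉ K, ∀ q ∉ K, HasContinuousLog fun z : K => ((z : ℂ) - p) / (z - q)) :
    IsPreconnected Kᶜ := by
  by_contra hsplit
  obtain ⟨U, V, hU, hV, hUV, hUVK, ⟨p, hp⟩, ⟨q, hq⟩⟩ :=
    exists_isOpen_disjoint_of_not_isPreconnected hK.isClosed.isOpen_compl hsplit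
  obtain rfl : K = (U ∪ V)ᶜ := by rw [hUVK, compl_compl]
  obtain ⟨r, hr⟩ := ((hK.insert p).insert q).isBounded.subset_ball 0
  have hsphere : sphere (0 : ℂ) r ⊆ U ∪ V := fun z hz => by
    by_contra hzK
    exact sphere_disjoint_ball.notMem_of_mem_left hz (hr (.inr (.inr hzK)))
  obtain ⟨hlogU, hlogV⟩ := HasContinuousLog.sub_of_isOpen_of_disjoint hU hV hUV hp hq
    (hlog p (by simp [hp]) q (by simp [hq]))
  have hrank : 1 < Module.rank ℝ ℂ := by simp [rank_real_complex]
  rcases (isPreconnected_sphere hrank 0 r).subset_or_subset hU hV hUV hsphere with hsU | hsV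
  · exact not_hasContinuousLog_sub_sphere (hr (.inl rfl))
      (hlogU.comp (continuous_inclusion hsU))
  · exact not_hasContinuousLog_sub_sphere (hr (.inr (.inl rfl)))
      (hlogV.comp (continuous_inclusion hsV))

theorem isPreconnected_compl_of_isTotallyDisconnected_complex (hK : IsCompact K)
    (htd : IsTotallyDisconnected K) : IsPreconnected Kᶜ := by
  have : CompactSpace K := isCompact_iff_compactSpace.1 hK
  have : TotallyDisconnectedSpace K := totallyDisconnectedSpace_subtype_iff.2 htd
  refine isPreconnected_compl_of_hasContinuousLog hK fun p hp q hq => ?_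
  have hne {w : ℂ} (hw : w ∉ K) (z : K) : (z : ℂ) - w ≠ 0 :=
    sub_ne_zero.2 (ne_of_mem_of_not_mem z.2 hw)
  have hcont : Continuous fun z : K => ((z : ℂ) - p) / (z - q) :=
    (continuous_subtype_val.sub continuous_const).div (continuous_subtype_val.sub continuous_const)
      (hne hq)
  exact hasContinuousLog_of_totallyDisconnectedSpace hcont fun z =>
    div_ne_zero (hne hp z) (hne hq z)

end Plane

section TopologicalVectorSpace

variable {F : Type*} [AddCommGroup F] [Module ℝ F] [TopologicalSpace F] [IsTopologicalAddGroup F]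
  [ContinuousSMul ℝ F] [T2Space F]

lemma exists_isClosedEmbedding_complex_of_one_lt_rank (hF : 1 < Module.rank ℝ F)
    {x y : F} (hxy : x ≠ y) :
    ∃ ι : ℂ → F, IsClosedEmbedding ι ∧ x ∈ range ι ∧ y ∈ range ι := by
  obtain ⟨w, hw⟩ := exists_linearIndependent_pair_of_one_lt_rank hF (sub_ne_zero.2 hxy.symm)
  let T : ℂ →ₗ[ℝ] F :=
    Fintype.linearCombination ℝ ![y - x, w] ∘ₗ basisOneI.equivFun.toLinearMap
  have hT : Function.Injective T :=
    hw.fintypeLinearCombination_injective.comp basisOneI.equivFun.injective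
  refine ⟨fun z => x + T z, (Homeomorph.addLeft x).isClosedEmbedding.comp
    (LinearMap.isClosedEmbedding_of_injective (LinearMap.ker_eq_bot.2 hT)), ⟨0, by simp⟩, 1, ?_⟩
  simp [T, Fintype.linearCombination_apply]

theorem stmt_2_general (hF : 1 < Module.rank ℝ F) {E : Set F} (hE : IsCompact E)
    (htd : IsTotallyDisconnected E) : IsConnected Eᶜ := by
  have : Nontrivial F := rank_pos_iff_nontrivial.1 (zero_lt_one.trans hF)
  have : PathConnectedSpace F := IsTopologicalAddGroup.pathConnectedSpace
  refine ⟨nonempty_compl_of_isTotallyDisconnected htd,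
    isPreconnected_of_forall_pair fun x hx y hy => ?_⟩
  rcases eq_or_ne x y with rfl | hxy
  · exact ⟨{x}, singleton_subset_iff.2 hx, rfl, rfl, isPreconnected_singleton⟩
  obtain ⟨ι, hι, ⟨a, rfl⟩, ⟨b, rfl⟩⟩ :=
    exists_isClosedEmbedding_complex_of_one_lt_rank hF hxy
  have htd' : IsTotallyDisconnected (ι ⁻¹' E) :=
    hι.isEmbedding.isTotallyDisconnected fun t ht => htd t (ht.trans (image_preimage_subset ι E))
  have hconn : IsPreconnected (ι ⁻¹' E)ᶜ :=
    isPreconnected_compl_of_isTotallyDisconnected_complex (hι.isCompact_preimage hE) htd'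
  exact ⟨ι '' (ι ⁻¹' E)ᶜ, image_subset_iff.2 Subset.rfl, mem_image_of_mem ι hx,
    mem_image_of_mem ι hy, hconn.image ι hι.continuous.continuousOn⟩

end TopologicalVectorSpace

/-- For `n ≥ 2`, the complement of a compact totally disconnected subset of ℝⁿ is
connected. -/
theorem stmt_2 (n : ℕ) (hn : 2 ≤ n) (E : Set (EuclideanSpace ℝ (Fin n)))
    (hcomp : IsCompact E) (htd : IsTotallyDisconnected E) :
    IsConnected Eᶜ :=
  stmt_2_general (by rw [← Module.finrank_eq_rank, finrank_euclideanSpace_fin]; exact_mod_cast hn)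
    hcomp htd
end

section
/- Let U be a nonempty bounded open subset of ℝⁿ and let f : ℝⁿ → ℂ be continuous with f(x) = 0 for every x in the frontier of U. For each connected component K of U, let a_K = (vol K)⁻¹ ∫_K f dvol denote the average of f over K (each component is nonempty, open, and bounded, hence has positive finite Lebesgue measure). Then for every ε > 0, the set of connected components K of U with ‖a_K‖ ≥ ε is finite. -/
open MeasureTheory

/-!
Since `U` is bounded and `f` vanishes on its frontier, the points of `U` where `‖f‖ ≥ ε` form a
compact set. The connected components of `U` are open and disjoint, so only finitely many of them
meet it, and a component over which the average of `f` has norm at least `ε` must meet it.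
-/

section Topology

variable {X : Type*} [TopologicalSpace X] {U C : Set X}

theorem finite_image_connectedComponentIn [LocallyConnectedSpace X] (hU : IsOpen U)
    (hC : IsCompact C) (hCU : C ⊆ U) : (connectedComponentIn U '' C).Finite := by
  obtain ⟨t, -, hCt⟩ := hC.elim_nhds_subcover (connectedComponentIn U) fun x hx ↦
    hU.connectedComponentIn.mem_nhds (mem_connectedComponentIn (hCU hx))
  refine (t.finite_toSet.image (connectedComponentIn U)).subset ?_
  rintro _ ⟨x, hx, rfl⟩
  obtain ⟨z, hz, hxz⟩ := Set.mem_iUnion₂.1 (hCt hx)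
  exact ⟨z, hz, connectedComponentIn_eq hxz⟩

theorem isCompact_setOf_le_norm_of_eq_zero_on_frontier {E : Type*} [SeminormedAddCommGroup E]
    {f : X → E} (hU : IsCompact (closure U)) (hf : ContinuousOn f (closure U))
    (hf0 : ∀ x ∈ frontier U, f x = 0) {c : ℝ} (hc : 0 < c) :
    IsCompact {x ∈ U | c ≤ ‖f x‖} := by
  have heq : {x ∈ U | c ≤ ‖f x‖} = closure U ∩ {x | c ≤ ‖f x‖} := by
    refine subset_antisymm (fun x hx ↦ ⟨subset_closure hx.1, hx.2⟩) ?_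
    rintro x ⟨hxU, hfx : c ≤ ‖f x‖⟩
    have hx : x ∉ frontier U := fun hx ↦ by
      rw [hf0 x hx, norm_zero] at hfx
      exact hc.not_ge hfx
    exact ⟨interior_subset ((closure_sdiff_frontier U).subset ⟨hxU, hx⟩), hfx⟩
  have hclosed : IsClosed (closure U ∩ {x | c ≤ ‖f x‖}) :=
    hf.norm.preimage_isClosed_of_isClosed isClosed_closure isClosed_Ici
  rw [heq]
  exact hU.of_isClosed_subset hclosed Set.inter_subset_left

end Topology

section Average

variable {X E : Type*} [MeasurableSpace X] {μ : Measure X} [NormedAddCommGroup E] [NormedSpace ℝ E]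

theorem exists_norm_setAverage_le_norm {f : X → E} {s : Set X} (hs₀ : μ s ≠ 0) (hs : μ s ≠ ⊤)
    (hf : IntegrableOn f s μ) : ∃ x ∈ s, ‖⨍ y in s, f y ∂μ‖ ≤ ‖f x‖ := by
  obtain ⟨x, hxs, hx⟩ := exists_setAverage_le hs₀ hs hf.norm
  exact ⟨x, hxs, (norm_integral_le_integral_norm f).trans hx⟩

theorem stmt_5_general [TopologicalSpace X] [LocallyConnectedSpace X] [OpensMeasurableSpace X]
    [μ.IsOpenPosMeasure] [IsFiniteMeasureOnCompacts μ] {U : Set X} (hUopen : IsOpen U)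
    (hU : IsCompact (closure U)) {f : X → E} (hf : ContinuousOn f (closure U))
    (hf0 : ∀ x ∈ frontier U, f x = 0) {ε : ℝ} (hε : 0 < ε) :
    {K : Set X | (∃ y ∈ U, K = connectedComponentIn U y) ∧ ε ≤ ‖⨍ x in K, f x ∂μ‖}.Finite := by
  have hcompact : IsCompact {x ∈ U | ε ≤ ‖f x‖} :=
    isCompact_setOf_le_norm_of_eq_zero_on_frontier hU hf hf0 hε
  refine (finite_image_connectedComponentIn hUopen hcompact (Set.sep_subset _ _)).subset ?_
  rintro _ ⟨⟨y, hy, rfl⟩, hK⟩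
  have hopen : IsOpen (connectedComponentIn U y) := hUopen.connectedComponentIn
  have hsub : connectedComponentIn U y ⊆ closure U :=
    (connectedComponentIn_subset U y).trans subset_closure
  have hpos : μ (connectedComponentIn U y) ≠ 0 :=
    (hopen.measure_pos μ ⟨y, mem_connectedComponentIn hy⟩).ne'
  have hfin : μ (connectedComponentIn U y) ≠ ⊤ := measure_ne_top_of_subset hsub hU.measure_ne_top
  have hint : IntegrableOn f (connectedComponentIn U y) μ :=
    hf.integrableOn_of_subset_isCompact hU hopen.measurableSet hsub hfin
  obtain ⟨x, hxK, hx⟩ := exists_norm_setAverage_le_norm hpos hfin hint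
  exact ⟨x, ⟨connectedComponentIn_subset U y hxK, hK.trans hx⟩, (connectedComponentIn_eq hxK).symm⟩

end Average

/-- If `f` is continuous and vanishes on the frontier of a nonempty bounded open set
`U ⊆ ℝⁿ`, then for every `ε > 0` only finitely many connected components `K` of `U`
have average of `f` over `K` of norm at least `ε`. -/
theorem stmt_5 (n : ℕ) (U : Set (EuclideanSpace ℝ (Fin n)))
    (hUopen : IsOpen U) (hUne : U.Nonempty) (hUbdd : Bornology.IsBounded U)
    (f : EuclideanSpace ℝ (Fin n) → ℂ) (hf : Continuous f)
    (hf0 : ∀ x ∈ frontier U, f x = 0) :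
    ∀ ε > (0 : ℝ),
      {K : Set (EuclideanSpace ℝ (Fin n)) |
        (∃ y ∈ U, K = connectedComponentIn U y) ∧
          ε ≤ ‖(volume K).toReal⁻¹ • ∫ x in K, f x ∂volume‖}.Finite := by
  simpa only [setAverage_eq, measureReal_def] using fun ε (hε : 0 < ε) ↦
    stmt_5_general (μ := volume) hUopen hUbdd.isCompact_closure hf.continuousOn hf0 hε
end

section
/- Let U be an open subset of ℂ and let f : ℂ → ℂ be continuous on U and complex differentiable at every point of U whose imaginary part is nonzero (i.e., f is complex differentiable on U \ ℝ). Then f is complex differentiable at every point of U. -/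
/-!
By Morera's theorem it suffices that the integral of `f` around every rectangle in `U` vanishes.
A horizontal line cuts a rectangle that it meets into two rectangles whose interiors avoid it, and
the integrals along the common edge cancel. For a rectangle whose interior avoids the line, the
Cauchy–Goursat theorem needs only continuity of `f` on the boundary.
-/

open Set Complex
open scoped Interval

section Rectangle

lemma continuousOn_vertical_of_rectangle {X : Type*} [TopologicalSpace X] {f : ℂ → X} {z w : ℂ}
    (hf : ContinuousOn f (Rectangle z w)) {x : ℝ} (hx : x ∈ [[z.re, w.re]]) :
    ContinuousOn (fun y : ℝ ↦ f (x + y * I)) [[z.im, w.im]] :=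
  hf.comp (by fun_prop) fun y hy ↦ ⟨by simpa using hx, by simpa using hy⟩

lemma interior_rectangle (z w : ℂ) :
    interior (Rectangle z w) =
      Ioo (min z.re w.re) (max z.re w.re) ×ℂ Ioo (min z.im w.im) (max z.im w.im) := by
  simp only [Rectangle, interior_reProdIm, uIcc, interior_Icc]

variable {E : Type*} [NormedAddCommGroup E] [NormedSpace ℂ E] {f : ℂ → E} {z w : ℂ} {t : ℝ}

/-- The integral of `f` along the boundary of the rectangle with opposite corners `z` and `w`,
encoded as the sum of the integrals along the two-edge paths from `z` to `w` and from `w` back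
to `z`. -/
noncomputable def rectangleBoundaryIntegral (f : ℂ → E) (z w : ℂ) : E :=
  wedgeIntegral z w f + wedgeIntegral w z f

lemma isConservativeOn_iff_rectangleBoundaryIntegral_eq_zero {U : Set ℂ} :
    IsConservativeOn f U ↔ ∀ z w, Rectangle z w ⊆ U → rectangleBoundaryIntegral f z w = 0 := by
  simp only [IsConservativeOn, rectangleBoundaryIntegral, add_eq_zero_iff_eq_neg]

lemma rectangleBoundaryIntegral_eq_zero_of_continuousOn_of_differentiableOn
    (hf : ContinuousOn f (Rectangle z w))
    (hd : DifferentiableOn ℂ f (interior (Rectangle z w))) :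
    rectangleBoundaryIntegral f z w = 0 := by
  rw [interior_rectangle] at hd
  rw [rectangleBoundaryIntegral, wedgeIntegral_add_wedgeIntegral_eq]
  exact integral_boundary_rect_eq_zero_of_continuousOn_of_differentiableOn f z w hf hd

lemma integral_vertical_add_adjacent (hf : ContinuousOn f (Rectangle z w)) {x : ℝ}
    (hx : x ∈ [[z.re, w.re]]) (ht : t ∈ [[z.im, w.im]]) :
    (∫ y in z.im..t, f (x + y * I)) + ∫ y in t..w.im, f (x + y * I) =
      ∫ y in z.im..w.im, f (x + y * I) :=
  have hcont := continuousOn_vertical_of_rectangle hf hx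
  intervalIntegral.integral_add_adjacent_intervals
    (hcont.mono (uIcc_subset_uIcc_left ht)).intervalIntegrable
    (hcont.mono (uIcc_subset_uIcc_right ht)).intervalIntegrable

lemma rectangleBoundaryIntegral_add_of_mem_uIcc (hf : ContinuousOn f (Rectangle z w))
    (ht : t ∈ [[z.im, w.im]]) :
    rectangleBoundaryIntegral f z ⟨w.re, t⟩ + rectangleBoundaryIntegral f ⟨z.re, t⟩ w =
      rectangleBoundaryIntegral f z w := by
  simp only [rectangleBoundaryIntegral, wedgeIntegral_add_wedgeIntegral_eq,
    ← integral_vertical_add_adjacent hf left_mem_uIcc ht,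
    ← integral_vertical_add_adjacent hf right_mem_uIcc ht, smul_add]
  abel

end Rectangle

section HorizontalLine

variable {E : Type*} [NormedAddCommGroup E] [NormedSpace ℂ E] {f : ℂ → E} {U : Set ℂ} {t : ℝ}

lemma rectangleBoundaryIntegral_eq_zero_of_notMem_Ioo (hf : ContinuousOn f U)
    (hd : DifferentiableOn ℂ f (U \ {z | z.im = t})) {z w : ℂ} (hzw : Rectangle z w ⊆ U)
    (ht : t ∉ Ioo (min z.im w.im) (max z.im w.im)) :
    rectangleBoundaryIntegral f z w = 0 := by
  refine rectangleBoundaryIntegral_eq_zero_of_continuousOn_of_differentiableOn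
    (hf.mono hzw) (hd.mono fun u hu ↦ ?_)
  refine ⟨hzw (interior_subset hu), fun hut : u.im = t ↦ ht ?_⟩
  rw [interior_rectangle] at hu
  exact hut ▸ hu.2

lemma isConservativeOn_of_differentiableOn_off_horizontal_line (hf : ContinuousOn f U)
    (hd : DifferentiableOn ℂ f (U \ {z | z.im = t})) : IsConservativeOn f U := by
  rw [isConservativeOn_iff_rectangleBoundaryIntegral_eq_zero]
  intro z w hzw
  by_cases ht : t ∈ [[z.im, w.im]]
  · have hlower : Rectangle z ⟨w.re, t⟩ ⊆ Rectangle z w :=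
      fun _ hu ↦ ⟨hu.1, uIcc_subset_uIcc_left ht hu.2⟩
    have hupper : Rectangle ⟨z.re, t⟩ w ⊆ Rectangle z w :=
      fun _ hu ↦ ⟨hu.1, uIcc_subset_uIcc_right ht hu.2⟩
    rw [← rectangleBoundaryIntegral_add_of_mem_uIcc (hf.mono hzw) ht,
      rectangleBoundaryIntegral_eq_zero_of_notMem_Ioo hf hd (hlower.trans hzw)
        (by simpa using le_of_lt),
      rectangleBoundaryIntegral_eq_zero_of_notMem_Ioo hf hd (hupper.trans hzw)
        (by simpa using le_of_lt),
      add_zero]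
  · exact rectangleBoundaryIntegral_eq_zero_of_notMem_Ioo hf hd hzw
      fun ht' ↦ ht (Ioo_subset_Icc_self ht')

theorem stmt_9_general [CompleteSpace E] (hU : IsOpen U) (hf : ContinuousOn f U)
    (hd : DifferentiableOn ℂ f (U \ {z | z.im = t})) : DifferentiableOn ℂ f U :=
  (isConservativeOn_and_continuousOn_iff_isDifferentiableOn hU).1
    ⟨isConservativeOn_of_differentiableOn_off_horizontal_line hf hd, hf⟩

end HorizontalLine

/-- A function continuous on an open set `U ⊆ ℂ` and complex differentiable on
`U \ ℝ` is complex differentiable at every point of `U`. -/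
theorem stmt_9 (U : Set ℂ) (hU : IsOpen U) (f : ℂ → ℂ)
    (hf : ContinuousOn f U)
    (hd : DifferentiableOn ℂ f (U \ {z : ℂ | z.im = 0})) :
    DifferentiableOn ℂ f U :=
  stmt_9_general hU hf hd
end

section
/- Let U be an open subset of ℂ, let E ⊆ ℂ be a set whose one-dimensional Hausdorff measure is zero, and let f : ℂ → ℂ be continuous on U and complex differentiable at every point of U \ E (differentiability within U \ E). Then f is complex differentiable at every point of U. -/
/-!
By Morera's theorem it suffices that `∮ f` vanishes around every rectangle `R` in `U`. To this end
one dominates `Q ↦ ‖∮ f‖`, over rectangles `Q` similar to `R`, by a measure of small mass on `R`.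
If each point of `R` has one scale at which the dyadic copies of `R` through that point satisfy such
a bound, then so does `R`, since otherwise bisection would contradict the bound at a limit point.

Off `E` a multiple `ε` of the area dominates at all small scales, as in Goursat's proof. Cover `E`
by balls of radii `r j` with small sum and let `‖f‖ ≤ M` on `R`. Around a point of the `j`-th ball
take `Q` of diameter comparable to `r j`: then `‖∮ f‖` is at most a multiple of `M * r j`, hence of
`M / r j` times the area of `Q`, and the measure with density `M / r j` on a ball of radius
`3 * r j` has mass comparable to `M * r j`, which is summable with small sum.
-/

open MeasureTheory Set Filter Topology Metric Complex Module
open scoped ENNReal NNReal Interval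

section Density

variable {𝕜 V F : Type*} [NontriviallyNormedField 𝕜] [NormedAddCommGroup V] [NormedSpace 𝕜 V]
  [NormedAddCommGroup F] [NormedSpace 𝕜 F] {f : V → F} {f' : V →L[𝕜] F} {s t : Set V} {x : V}

-- The inequality defining the derivative is closed, so it passes from `s` to `closure s`.
theorem hasFDerivWithinAt_of_subset_closure (hst : s ⊆ t) (hts : t ⊆ closure s)
    (hf : ContinuousOn f t) (h : HasFDerivWithinAt f f' s x) : HasFDerivWithinAt f f' t x := by
  rw [hasFDerivWithinAt_iff_isLittleO, Asymptotics.isLittleO_iff] at h ⊢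
  intro c hc
  obtain ⟨v, hv, hvo, hxv⟩ := _root_.eventually_nhds_iff.1 (eventually_nhdsWithin_iff.1 (h hc))
  refine eventually_nhdsWithin_iff.2 ?_
  filter_upwards [hvo.mem_nhds hxv] with y hyv hyt
  have hfy : ContinuousWithinAt f (v ∩ s) y := (hf y hyt).mono (inter_subset_right.trans hst)
  have hf'y : ContinuousWithinAt (fun y ↦ f' (y - x)) (v ∩ s) y :=
    Continuous.continuousWithinAt (by fun_prop)
  exact ContinuousWithinAt.closure_le (hvo.inter_closure ⟨hyv, hts hyt⟩)
    ((hfy.sub_const _).sub hf'y).norm (Continuous.continuousWithinAt (by fun_prop))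
    fun y hy ↦ hv y hy.1 hy.2

end Density

theorem dense_compl_of_hausdorffMeasure_eq_zero {V : Type*} [NormedAddCommGroup V]
    [NormedSpace ℝ V] [FiniteDimensional ℝ V] [MeasurableSpace V] [BorelSpace V] {d : ℝ≥0}
    (hd : d < finrank ℝ V) {E : Set V} (hE : μH[d] E = 0) : Dense Eᶜ :=
  dense_compl_of_dimH_lt_finrank <|
    (dimH_le_of_hausdorffMeasure_ne_top (hE.trans_ne ENNReal.zero_ne_top)).trans_lt
      (by exact_mod_cast hd)

theorem exists_ball_cover_of_hausdorffMeasure_one_eq_zero {X : Type*} [MetricSpace X] [Nonempty X]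
    [MeasurableSpace X] [BorelSpace X] {E : Set X} (hE : μH[1] E = 0) {η : ℝ≥0∞} (hη : η ≠ 0) :
    ∃ (x : ℕ → X) (r : ℕ → ℝ≥0), (∀ j, 0 < r j) ∧ ∑' j, (r j : ℝ≥0∞) ≤ η ∧
      E ⊆ ⋃ j, ball (x j) (r j) := by
  have hη2 : η / 2 ≠ 0 := by simpa using hη
  obtain ⟨t, hEt, ht_diam, ht_sum⟩ : ∃ t : ℕ → Set X, E ⊆ ⋃ j, t j ∧ (∀ j, ediam (t j) ≤ 1) ∧
      ∑' j, ⨆ _ : (t j).Nonempty, ediam (t j) ^ (1 : ℝ) < η / 2 := by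
    simp only [Measure.hausdorffMeasure_apply, ENNReal.iSup_eq_zero] at hE
    simpa only [iInf_lt_iff, exists_prop] using (hE 1 one_pos).trans_lt hη2.bot_lt
  have hfin (j : ℕ) : ediam (t j) ≠ ∞ := ((ht_diam j).trans_lt ENNReal.one_lt_top).ne
  obtain ⟨δ, hδ_pos, hδ_sum⟩ := ENNReal.exists_pos_sum_of_countable hη2 ℕ
  have hx (j : ℕ) : ∃ x : X, (t j).Nonempty → x ∈ t j := by
    rcases (t j).eq_empty_or_nonempty with h | ⟨x, hx⟩
    · exact ⟨Classical.arbitrary X, by simp [h]⟩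
    · exact ⟨x, fun _ ↦ hx⟩
  choose x hx using hx
  refine ⟨x, fun j ↦ (ediam (t j)).toNNReal + δ j, fun j ↦ by have := hδ_pos j; positivity, ?_, ?_⟩
  · calc ∑' j, (((ediam (t j)).toNNReal + δ j : ℝ≥0) : ℝ≥0∞)
        = ∑' j, ediam (t j) + ∑' j, (δ j : ℝ≥0∞) := by
          simp only [ENNReal.coe_add, ENNReal.coe_toNNReal (hfin _), ENNReal.tsum_add]
      _ ≤ η / 2 + η / 2 := by
          refine add_le_add (le_trans (ENNReal.tsum_le_tsum fun j ↦ ?_) ht_sum.le) hδ_sum.le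
          rcases (t j).eq_empty_or_nonempty with h | h <;> simp [h]
      _ = η := ENNReal.add_halves η
  · intro y hy
    obtain ⟨j, hj⟩ := mem_iUnion.1 (hEt hy)
    refine mem_iUnion.2 ⟨j, ?_⟩
    rw [← eball_coe, mem_eball, ENNReal.coe_add, ENNReal.coe_toNNReal (hfin j)]
    exact (edist_le_ediam_of_mem hj (hx j ⟨y, hj⟩)).trans_lt
      (ENNReal.lt_add_right (hfin j) (by simpa using (hδ_pos j).ne'))

section RectangleInduction

variable {z w z' w' : ℂ}

theorem left_mem_rectangle (z w : ℂ) : z ∈ Rectangle z w := ⟨left_mem_uIcc, left_mem_uIcc⟩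

theorem rectangle_subset_rectangle (hz : z' ∈ Rectangle z w) (hw : w' ∈ Rectangle z w) :
    Rectangle z' w' ⊆ Rectangle z w :=
  fun _ h ↦ ⟨uIcc_subset_uIcc hz.1 hw.1 h.1, uIcc_subset_uIcc hz.2 hw.2 h.2⟩

theorem isCompact_rectangle (z w : ℂ) : IsCompact (Rectangle z w) :=
  isCompact_uIcc.reProdIm isCompact_uIcc

theorem norm_sub_le_of_mem_rectangle (hz : z' ∈ Rectangle z w) (hw : w' ∈ Rectangle z w) :
    ‖w' - z'‖ ≤ ‖w - z‖ := by
  have hre := abs_sub_le_of_uIcc_subset_uIcc (uIcc_subset_uIcc hz.1 hw.1)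
  have him := abs_sub_le_of_uIcc_subset_uIcc (uIcc_subset_uIcc hz.2 hw.2)
  rw [← sq_le_sq₀ (norm_nonneg _) (norm_nonneg _), Complex.sq_norm, Complex.sq_norm,
    normSq_apply, normSq_apply]
  exact add_le_add (abs_le_iff_mul_self_le.1 hre) (abs_le_iff_mul_self_le.1 him)

variable {P : ℂ → ℂ → Prop} {R : Set ℂ}

theorem exists_half_rectangle_not
    (hre : ∀ z w (m : ℝ), Rectangle z w ⊆ R → m ∈ [[z.re, w.re]] →
      P z ⟨m, w.im⟩ → P ⟨m, z.im⟩ w → P z w)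
    (him : ∀ z w (m : ℝ), Rectangle z w ⊆ R → m ∈ [[z.im, w.im]] →
      P z ⟨w.re, m⟩ → P ⟨z.re, m⟩ w → P z w)
    (hzw : Rectangle z w ⊆ R) (h : ¬ P z w) :
    ∃ z' w', Rectangle z' w' ⊆ Rectangle z w ∧ w' - z' = (w - z) / 2 ∧ ¬ P z' w' := by
  by_contra! hhalf
  have mem_mid (a b : ℝ) : (a + b) / 2 ∈ [[a, b]] := by
    rw [mem_uIcc]
    grind
  set x := (z.re + w.re) / 2
  set y := (z.im + w.im) / 2
  have hx : x ∈ [[z.re, w.re]] := mem_mid _ _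
  have hy : y ∈ [[z.im, w.im]] := mem_mid _ _
  have half {z' w' : ℂ} (hz' : z' ∈ Rectangle z w) (hw' : w' ∈ Rectangle z w)
      (hre' : w'.re - z'.re = (w.re - z.re) / 2) (him' : w'.im - z'.im = (w.im - z.im) / 2) :
      P z' w' :=
    hhalf z' w' (rectangle_subset_rectangle hz' hw') (by apply Complex.ext <;> simpa)
  have hz : z ∈ Rectangle z w := left_mem_rectangle z w
  have hw : w ∈ Rectangle z w := ⟨right_mem_uIcc, right_mem_uIcc⟩
  have hright : (⟨w.re, y⟩ : ℂ) ∈ Rectangle z w := ⟨right_mem_uIcc, hy⟩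
  have hleft : (⟨z.re, y⟩ : ℂ) ∈ Rectangle z w := ⟨left_mem_uIcc, hy⟩
  have hcenter : (⟨x, y⟩ : ℂ) ∈ Rectangle z w := ⟨hx, hy⟩
  have lower : P z ⟨w.re, y⟩ := by
    refine hre z _ x ((rectangle_subset_rectangle hz hright).trans hzw) hx
      (half hz hcenter ?_ ?_) (half ⟨hx, left_mem_uIcc⟩ hright ?_ ?_) <;> grind
  have upper : P ⟨z.re, y⟩ w := by
    refine hre _ w x ((rectangle_subset_rectangle hleft hw).trans hzw) hx
      (half hleft ⟨hx, right_mem_uIcc⟩ ?_ ?_) (half hcenter hw ?_ ?_) <;> grind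
  exact h (him z w y hzw hy lower upper)

-- Otherwise bisection yields nested rectangles on which `P` fails; test `hloc` at a common point.
theorem rectangle_induction
    (hre : ∀ z' w' (m : ℝ), Rectangle z' w' ⊆ Rectangle z w → m ∈ [[z'.re, w'.re]] →
      P z' ⟨m, w'.im⟩ → P ⟨m, z'.im⟩ w' → P z' w')
    (him : ∀ z' w' (m : ℝ), Rectangle z' w' ⊆ Rectangle z w → m ∈ [[z'.im, w'.im]] →
      P z' ⟨w'.re, m⟩ → P ⟨z'.re, m⟩ w' → P z' w')
    (hloc : ∀ ζ ∈ Rectangle z w, ∃ n : ℕ, ∀ z' w', Rectangle z' w' ⊆ Rectangle z w →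
      ζ ∈ Rectangle z' w' → w' - z' = (w - z) / 2 ^ n → P z' w') :
    P z w := by
  by_contra h
  let Bad := {q : ℂ × ℂ // Rectangle q.1 q.2 ⊆ Rectangle z w ∧ ¬ P q.1 q.2}
  have hhalf (q : Bad) : ∃ q' : Bad, Rectangle q'.1.1 q'.1.2 ⊆ Rectangle q.1.1 q.1.2 ∧
      q'.1.2 - q'.1.1 = (q.1.2 - q.1.1) / 2 := by
    obtain ⟨z', w', hsub, hdiag, hP⟩ := exists_half_rectangle_not hre him q.2.1 q.2.2
    exact ⟨⟨(z', w'), hsub.trans q.2.1, hP⟩, hsub, hdiag⟩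
  choose half half_sub half_diag using hhalf
  let Q (n : ℕ) : Bad := half^[n] ⟨(z, w), Subset.rfl, h⟩
  have Q_succ (n : ℕ) : Q (n + 1) = half (Q n) := Function.iterate_succ_apply' ..
  have Q_diag (n : ℕ) : (Q n).1.2 - (Q n).1.1 = (w - z) / 2 ^ n := by
    induction n with
    | zero => simp [Q]
    | succ n ih => rw [Q_succ, half_diag, ih, pow_succ, div_div]
  obtain ⟨ζ, hζ⟩ := IsCompact.nonempty_iInter_of_sequence_nonempty_isCompact_isClosed
    (fun n ↦ Rectangle (Q n).1.1 (Q n).1.2) (fun n ↦ Q_succ n ▸ half_sub (Q n))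
    (fun n ↦ ⟨_, left_mem_rectangle _ _⟩) (isCompact_rectangle _ _)
    (fun n ↦ (isCompact_rectangle _ _).isClosed)
  rw [mem_iInter] at hζ
  obtain ⟨n, hn⟩ := hloc ζ (hζ 0)
  exact (Q n).2.2 (hn _ _ (Q n).2.1 (hζ n) (Q_diag n))

end RectangleInduction

section BoundaryIntegral

variable {F : Type*} [NormedAddCommGroup F] {f g : ℂ → F} {z w : ℂ}

theorem intervalIntegrable_re_of_continuousOn_rectangle (hf : ContinuousOn f (Rectangle z w))
    {a b y : ℝ} (ha : a ∈ [[z.re, w.re]]) (hb : b ∈ [[z.re, w.re]]) (hy : y ∈ [[z.im, w.im]]) :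
    IntervalIntegrable (fun x : ℝ ↦ f (x + y * I)) volume a b :=
  (hf.comp (by fun_prop) fun x hx ↦
    ⟨by simpa using uIcc_subset_uIcc ha hb hx, by simpa using hy⟩).intervalIntegrable

theorem intervalIntegrable_im_of_continuousOn_rectangle (hf : ContinuousOn f (Rectangle z w))
    {a b x : ℝ} (ha : a ∈ [[z.im, w.im]]) (hb : b ∈ [[z.im, w.im]]) (hx : x ∈ [[z.re, w.re]]) :
    IntervalIntegrable (fun y : ℝ ↦ f (x + y * I)) volume a b :=
  (hf.comp (by fun_prop) fun y hy ↦
    ⟨by simpa using hx, by simpa using uIcc_subset_uIcc ha hb hy⟩).intervalIntegrable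

variable [NormedSpace ℂ F]

/-- The integral of `f` along the boundary of the rectangle with opposite corners `z` and `w`,
traversed from `z` horizontally to the next corner, then to `w` and back to `z`. -/
noncomputable def rectIntegral (f : ℂ → F) (z w : ℂ) : F :=
  wedgeIntegral z w f + wedgeIntegral w z f

theorem rectIntegral_eq_zero_of_differentiableOn (hf : DifferentiableOn ℂ f (Rectangle z w)) :
    rectIntegral f z w = 0 :=
  add_eq_zero_iff_eq_neg.2 (hf.isConservativeOn z w Subset.rfl)

theorem rectIntegral_sub (hf : ContinuousOn f (Rectangle z w))
    (hg : ContinuousOn g (Rectangle z w)) :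
    rectIntegral (f - g) z w = rectIntegral f z w - rectIntegral g z w := by
  have hre {h : ℂ → F} (hh : ContinuousOn h (Rectangle z w)) {y : ℝ} (hy : y ∈ [[z.im, w.im]]) :=
    intervalIntegrable_re_of_continuousOn_rectangle hh left_mem_uIcc right_mem_uIcc hy
  have him {h : ℂ → F} (hh : ContinuousOn h (Rectangle z w)) {x : ℝ} (hx : x ∈ [[z.re, w.re]]) :=
    intervalIntegrable_im_of_continuousOn_rectangle hh left_mem_uIcc right_mem_uIcc hx
  simp only [rectIntegral, wedgeIntegral_add_wedgeIntegral_eq, Pi.sub_apply]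
  rw [intervalIntegral.integral_sub (hre hf left_mem_uIcc) (hre hg left_mem_uIcc),
    intervalIntegral.integral_sub (hre hf right_mem_uIcc) (hre hg right_mem_uIcc),
    intervalIntegral.integral_sub (him hf left_mem_uIcc) (him hg left_mem_uIcc),
    intervalIntegral.integral_sub (him hf right_mem_uIcc) (him hg right_mem_uIcc)]
  simp only [smul_sub]
  abel

theorem rectIntegral_split_re (hf : ContinuousOn f (Rectangle z w)) {m : ℝ}
    (hm : m ∈ [[z.re, w.re]]) :
    rectIntegral f z w = rectIntegral f z ⟨m, w.im⟩ + rectIntegral f ⟨m, z.im⟩ w := by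
  have split {y : ℝ} (hy : y ∈ [[z.im, w.im]]) := intervalIntegral.integral_add_adjacent_intervals
    (intervalIntegrable_re_of_continuousOn_rectangle hf left_mem_uIcc hm hy)
    (intervalIntegrable_re_of_continuousOn_rectangle hf hm right_mem_uIcc hy)
  simp only [rectIntegral, wedgeIntegral_add_wedgeIntegral_eq]
  rw [← split left_mem_uIcc, ← split right_mem_uIcc]
  abel

theorem rectIntegral_split_im (hf : ContinuousOn f (Rectangle z w)) {m : ℝ}
    (hm : m ∈ [[z.im, w.im]]) :
    rectIntegral f z w = rectIntegral f z ⟨w.re, m⟩ + rectIntegral f ⟨z.re, m⟩ w := by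
  have split {x : ℝ} (hx : x ∈ [[z.re, w.re]]) := intervalIntegral.integral_add_adjacent_intervals
    (intervalIntegrable_im_of_continuousOn_rectangle hf left_mem_uIcc hm hx)
    (intervalIntegrable_im_of_continuousOn_rectangle hf hm right_mem_uIcc hx)
  simp only [rectIntegral, wedgeIntegral_add_wedgeIntegral_eq]
  rw [← split left_mem_uIcc, ← split right_mem_uIcc, smul_add, smul_add]
  abel

theorem norm_wedgeIntegral_le {M : ℝ} (hM : ∀ ζ ∈ Rectangle z w, ‖f ζ‖ ≤ M) :
    ‖wedgeIntegral z w f‖ ≤ 2 * M * ‖w - z‖ := by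
  have hM0 : 0 ≤ M := (norm_nonneg _).trans (hM z (left_mem_rectangle z w))
  have hre : ‖∫ x : ℝ in z.re..w.re, f (x + z.im * I)‖ ≤ M * |(w - z).re| :=
    intervalIntegral.norm_integral_le_of_norm_le_const fun x hx ↦
      hM _ ⟨by simpa using uIoc_subset_uIcc hx, by simp⟩
  have him : ‖I • ∫ y : ℝ in z.im..w.im, f (w.re + y * I)‖ ≤ M * |(w - z).im| := by
    rw [norm_smul, norm_I, one_mul]
    exact intervalIntegral.norm_integral_le_of_norm_le_const fun y hy ↦
      hM _ ⟨by simp, by simpa using uIoc_subset_uIcc hy⟩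
  calc ‖wedgeIntegral z w f‖ ≤ M * |(w - z).re| + M * |(w - z).im| := norm_add_le_of_le hre him
    _ ≤ M * ‖w - z‖ + M * ‖w - z‖ := by gcongr <;> simp only [abs_re_le_norm, abs_im_le_norm]
    _ = 2 * M * ‖w - z‖ := by ring

theorem norm_rectIntegral_le {M : ℝ} (hM : ∀ ζ ∈ Rectangle z w, ‖f ζ‖ ≤ M) :
    ‖rectIntegral f z w‖ ≤ 4 * M * ‖w - z‖ := by
  have hM' : ∀ ζ ∈ Rectangle w z, ‖f ζ‖ ≤ M := by rwa [Rectangle, uIcc_comm, uIcc_comm w.im]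
  calc ‖rectIntegral f z w‖ ≤ 2 * M * ‖w - z‖ + 2 * M * ‖z - w‖ :=
        norm_add_le_of_le (norm_wedgeIntegral_le hM) (norm_wedgeIntegral_le hM')
    _ = 4 * M * ‖w - z‖ := by rw [norm_sub_rev z w]; ring

theorem exists_norm_rectIntegral_le_sq {S : Set ℂ} {ζ : ℂ} (hf : ContinuousOn f S)
    (hd : DifferentiableWithinAt ℂ f S ζ) {ε : ℝ} (hε : 0 < ε) :
    ∃ δ > 0, ∀ z w, Rectangle z w ⊆ S → ζ ∈ Rectangle z w → ‖w - z‖ < δ →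
      ‖rectIntegral f z w‖ ≤ 4 * ε * ‖w - z‖ ^ 2 := by
  obtain ⟨f', hf'⟩ := hd
  rw [hasFDerivWithinAt_iff_isLittleO, Asymptotics.isLittleO_iff] at hf'
  obtain ⟨δ, hδ, hball⟩ := mem_nhdsWithin_iff.1 (hf' hε)
  refine ⟨δ, hδ, fun z w hzw hζ hlt ↦ ?_⟩
  let T : ℂ → F := fun y ↦ f ζ + f' (y - ζ)
  have hT : Differentiable ℂ T := by fun_prop
  have hsub : rectIntegral (f - T) z w = rectIntegral f z w := by
    rw [rectIntegral_sub (hf.mono hzw) hT.continuous.continuousOn,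
      rectIntegral_eq_zero_of_differentiableOn hT.differentiableOn, sub_zero]
  have hremainder : ∀ y ∈ Rectangle z w, ‖(f - T) y‖ ≤ ε * ‖w - z‖ := by
    intro y hy
    have hyζ : ‖y - ζ‖ ≤ ‖w - z‖ := norm_sub_le_of_mem_rectangle hζ hy
    have hymem : y ∈ ball ζ δ ∩ S := ⟨mem_ball_iff_norm.2 (hyζ.trans_lt hlt), hzw hy⟩
    calc ‖(f - T) y‖ = ‖f y - f ζ - f' (y - ζ)‖ := by simp only [Pi.sub_apply, T, sub_sub]
      _ ≤ ε * ‖y - ζ‖ := hball hymem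
      _ ≤ ε * ‖w - z‖ := by gcongr
  calc ‖rectIntegral f z w‖ ≤ 4 * (ε * ‖w - z‖) * ‖w - z‖ := hsub ▸ norm_rectIntegral_le hremainder
    _ = 4 * ε * ‖w - z‖ ^ 2 := by ring

end BoundaryIntegral

section RectIoc

/-- The half-open rectangle with opposite corners `z` and `w`. Cutting it along a line gives two
disjoint half-open rectangles, so measures are additive on these where closed rectangles would
overlap. -/
def rectIoc (z w : ℂ) : Set ℂ := Ι z.re w.re ×ℂ Ι z.im w.im

variable {z w z' w' : ℂ}

theorem measurableSet_rectIoc (z w : ℂ) : MeasurableSet (rectIoc z w) :=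
  (measurable_re measurableSet_uIoc).inter (measurable_im measurableSet_uIoc)

theorem rectIoc_subset_rectangle (z w : ℂ) : rectIoc z w ⊆ Rectangle z w :=
  reProdIm_subset_iff.2 (prod_mono uIoc_subset_uIcc uIoc_subset_uIcc)

theorem volume_rectIoc (z w : ℂ) :
    volume (rectIoc z w) = ENNReal.ofReal (|(w - z).re| * |(w - z).im|) := by
  have hpre : rectIoc z w = measurableEquivRealProd ⁻¹' (Ι z.re w.re ×ˢ Ι z.im w.im) := rfl
  rw [hpre, volume_preserving_equiv_real_prod.measure_preimage_equiv, Measure.volume_eq_prod,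
    Measure.prod_prod, Real.volume_uIoc, Real.volume_uIoc, ENNReal.ofReal_mul (abs_nonneg _),
    sub_re, sub_im]

theorem disjoint_uIoc_uIoc {a b m : ℝ} (hm : m ∈ [[a, b]]) : Disjoint (Ι a m) (Ι m b) := by
  rw [disjoint_left]
  intro t
  simp only [mem_uIoc, mem_uIcc] at hm ⊢
  grind

theorem measure_rectIoc_split_re (μ : Measure ℂ) {m : ℝ} (hm : m ∈ [[z.re, w.re]]) :
    μ (rectIoc z w) = μ (rectIoc z ⟨m, w.im⟩) + μ (rectIoc ⟨m, z.im⟩ w) := by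
  rw [← measure_union _ (measurableSet_rectIoc _ _)]
  · congr 1
    simp only [rectIoc, ← uIoc_union_uIoc hm, reProdIm, preimage_union, union_inter_distrib_right]
  · exact ((disjoint_uIoc_uIoc hm).preimage re).mono inter_subset_left inter_subset_left

theorem measure_rectIoc_split_im (μ : Measure ℂ) {m : ℝ} (hm : m ∈ [[z.im, w.im]]) :
    μ (rectIoc z w) = μ (rectIoc z ⟨w.re, m⟩) + μ (rectIoc ⟨z.re, m⟩ w) := by
  rw [← measure_union _ (measurableSet_rectIoc _ _)]
  · congr 1
    simp only [rectIoc, ← uIoc_union_uIoc hm, reProdIm, preimage_union, inter_union_distrib_left]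
  · exact ((disjoint_uIoc_uIoc hm).preimage im).mono inter_subset_right inter_subset_right

/-- The square of the diagonal of a rectangle divided by its area. It is invariant under scaling;
degenerate rectangles have eccentricity `0`. -/
noncomputable def rectEccentricity (z w : ℂ) : ℝ :=
  ‖w - z‖ ^ 2 / (|(w - z).re| * |(w - z).im|)

theorem ofReal_norm_sq_eq_rectEccentricity_mul_volume (hre : (w - z).re ≠ 0)
    (him : (w - z).im ≠ 0) {c : ℝ} (hc : 0 < c) (h : w' - z' = (w - z) / c) :
    ENNReal.ofReal (‖w' - z'‖ ^ 2) =
      ENNReal.ofReal (rectEccentricity z w) * volume (rectIoc z' w') := by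
  rw [rectEccentricity, volume_rectIoc, ← ENNReal.ofReal_mul (by positivity), h, div_ofReal_re,
    div_ofReal_im, norm_div, norm_real, abs_div, abs_div, Real.norm_eq_abs, abs_of_pos hc]
  congr 1
  field_simp

end RectIoc

section CoverMeasure

/-- Given the balls `ball (x j) (r j)` of a cover, the measure with density
`ε + ∑ j, M / r j * indicator (closedBall (x j) (3 * r j))`: its first term is to dominate boundary
integrals around points of differentiability, the `j`-th summand those of size comparable to `r j`
around points of the `j`-th ball. -/
noncomputable def coverMeasure (ε M : ℝ≥0) (x : ℕ → ℂ) (r : ℕ → ℝ≥0) : Measure ℂ :=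
  ε • volume + Measure.sum fun j ↦ (M / r j) • volume.restrict (closedBall (x j) (3 * r j))

variable {ε M : ℝ≥0} {x : ℕ → ℂ} {r : ℕ → ℝ≥0}

theorem mul_volume_le_coverMeasure (S : Set ℂ) : ε * volume S ≤ coverMeasure ε M x r S :=
  Measure.le_add_right (le_refl (ε • volume)) S

theorem div_mul_volume_le_coverMeasure {S : Set ℂ} {j : ℕ} (hS : S ⊆ closedBall (x j) (3 * r j)) :
    (M / r j : ℝ≥0) * volume S ≤ coverMeasure ε M x r S :=
  calc (M / r j : ℝ≥0) * volume S
      = ((M / r j) • volume.restrict (closedBall (x j) (3 * r j)) : Measure ℂ) S := by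
        rw [Measure.smul_apply, Measure.restrict_eq_self _ hS, ENNReal.smul_def, smul_eq_mul]
    _ ≤ coverMeasure ε M x r S :=
        (Measure.le_sum _ j S).trans (Measure.le_add_left le_rfl S)

theorem coverMeasure_apply_le (hr : ∀ j, 0 < r j) {S : Set ℂ} (hS : MeasurableSet S) :
    coverMeasure ε M x r S ≤ ε * volume S + 9 * NNReal.pi * M * ∑' j, (r j : ℝ≥0∞) := by
  have hball (j : ℕ) : ((M / r j) • volume.restrict (closedBall (x j) (3 * r j)) : Measure ℂ) S ≤
      9 * NNReal.pi * M * r j :=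
    calc ((M / r j) • volume.restrict (closedBall (x j) (3 * r j)) : Measure ℂ) S
        ≤ (M / r j : ℝ≥0) * volume (closedBall (x j) (3 * r j)) := by
          rw [Measure.smul_apply, ENNReal.smul_def, smul_eq_mul, Measure.restrict_apply hS]
          gcongr
          exact inter_subset_right
      _ = ((M / r j * ((3 * r j) ^ 2 * NNReal.pi) : ℝ≥0) : ℝ≥0∞) := by
          rw [volume_closedBall]
          norm_cast
          rw [ENNReal.ofReal_coe_nnreal]
          norm_cast
      _ = 9 * NNReal.pi * M * r j := by
          have := (hr j).ne'
          norm_cast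
          field_simp
          ring
  rw [coverMeasure, Measure.add_apply, Measure.sum_apply _ hS, ← ENNReal.tsum_mul_left]
  exact add_le_add le_rfl (ENNReal.tsum_le_tsum hball)

end CoverMeasure

section Removability

variable {F : Type*} [NormedAddCommGroup F] [NormedSpace ℂ F] {f : ℂ → F} {z w ζ : ℂ}

theorem enorm_rectIntegral_le_measure_rectIoc (hf : ContinuousOn f (Rectangle z w)) (μ : Measure ℂ)
    (hloc : ∀ ζ ∈ Rectangle z w, ∃ n : ℕ, ∀ z' w', Rectangle z' w' ⊆ Rectangle z w →
      ζ ∈ Rectangle z' w' → w' - z' = (w - z) / 2 ^ n →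
      ‖rectIntegral f z' w'‖ₑ ≤ μ (rectIoc z' w')) :
    ‖rectIntegral f z w‖ₑ ≤ μ (rectIoc z w) := by
  refine rectangle_induction (P := fun z' w' ↦ ‖rectIntegral f z' w'‖ₑ ≤ μ (rectIoc z' w'))
    (fun z' w' m hsub hm h₁ h₂ ↦ ?_) (fun z' w' m hsub hm h₁ h₂ ↦ ?_) hloc
  · rw [rectIntegral_split_re (hf.mono hsub) hm, measure_rectIoc_split_re μ hm]
    exact (enorm_add_le _ _).trans (add_le_add h₁ h₂)
  · rw [rectIntegral_split_im (hf.mono hsub) hm, measure_rectIoc_split_im μ hm]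
    exact (enorm_add_le _ _).trans (add_le_add h₁ h₂)

theorem enorm_rectIntegral_le_of_norm_le_sq {z' w' : ℂ} (hre : (w - z).re ≠ 0)
    (him : (w - z).im ≠ 0) {c : ℝ} (hc : 0 < c) (h : w' - z' = (w - z) / c) {K : ℝ≥0}
    (hK : ‖rectIntegral f z' w'‖ ≤ 4 * K * ‖w' - z'‖ ^ 2) :
    ‖rectIntegral f z' w'‖ₑ ≤
      4 * ENNReal.ofReal (rectEccentricity z w) * (K * volume (rectIoc z' w')) :=
  calc ‖rectIntegral f z' w'‖ₑ ≤ ENNReal.ofReal (4 * K * ‖w' - z'‖ ^ 2) := by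
        rw [← ofReal_norm]; exact ENNReal.ofReal_le_ofReal hK
    _ = 4 * K * (ENNReal.ofReal (rectEccentricity z w) * volume (rectIoc z' w')) := by
        rw [ENNReal.ofReal_mul (by positivity), ENNReal.ofReal_mul (by positivity),
          ofReal_norm_sq_eq_rectEccentricity_mul_volume hre him hc h, ENNReal.ofReal_coe_nnreal,
          ENNReal.ofReal_ofNat]
    _ = _ := by ring

theorem exists_scale_norm_rectIntegral_le_of_differentiableWithinAt
    (hf : ContinuousOn f (Rectangle z w)) (hd : DifferentiableWithinAt ℂ f (Rectangle z w) ζ)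
    {ε : ℝ} (hε : 0 < ε) :
    ∃ n : ℕ, ∀ z' w', Rectangle z' w' ⊆ Rectangle z w → ζ ∈ Rectangle z' w' →
      w' - z' = (w - z) / 2 ^ n → ‖rectIntegral f z' w'‖ ≤ 4 * ε * ‖w' - z'‖ ^ 2 := by
  obtain ⟨δ, hδ, hsq⟩ := exists_norm_rectIntegral_le_sq hf hd hε
  obtain ⟨n, hn⟩ := pow_unbounded_of_one_lt (‖w - z‖ / δ) one_lt_two
  refine ⟨n, fun z' w' hsub hζ hdiag ↦ hsq z' w' hsub hζ ?_⟩
  rw [hdiag, norm_div, norm_pow, Complex.norm_two]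
  exact (div_lt_comm₀ hδ (by positivity)).1 hn

-- At the scale where the diagonal is between `r` and `2 * r`, the length is at most a multiple of
-- the squared diagonal over `r`.
theorem exists_scale_norm_rectIntegral_le_of_mem_ball {M : ℝ} (hM : ∀ ζ ∈ Rectangle z w, ‖f ζ‖ ≤ M)
    {x : ℂ} {r : ℝ} (hr : 0 < r) (hrzw : r ≤ ‖w - z‖) (hζx : ζ ∈ ball x r) :
    ∃ n : ℕ, ∀ z' w', Rectangle z' w' ⊆ Rectangle z w → ζ ∈ Rectangle z' w' →
      w' - z' = (w - z) / 2 ^ n →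
      Rectangle z' w' ⊆ closedBall x (3 * r) ∧
        ‖rectIntegral f z' w'‖ ≤ 4 * (M / r) * ‖w' - z'‖ ^ 2 := by
  obtain ⟨n, hn, hn'⟩ := exists_nat_pow_near ((one_le_div₀ hr).2 hrzw) one_lt_two
  refine ⟨n, fun z' w' hsub hζ hdiag ↦ ?_⟩
  have hnorm : ‖w' - z'‖ = ‖w - z‖ / 2 ^ n := by
    rw [hdiag, norm_div, norm_pow, Complex.norm_two]
  have hr_le : r ≤ ‖w' - z'‖ := by
    rw [hnorm]
    exact (le_div_comm₀ (by positivity) hr).1 hn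
  have hlt : ‖w' - z'‖ < 2 * r := by
    rw [hnorm, div_lt_iff₀ (by positivity)]
    calc ‖w - z‖ < 2 ^ (n + 1) * r := (div_lt_iff₀ hr).1 hn'
      _ = 2 * r * 2 ^ n := by ring
  have hM0 : 0 ≤ M := (norm_nonneg _).trans (hM ζ (hsub hζ))
  refine ⟨fun y hy ↦ mem_closedBall.2 ?_, ?_⟩
  · calc dist y x ≤ dist y ζ + dist ζ x := dist_triangle _ _ _
      _ ≤ 2 * r + r := by
        gcongr
        · exact (dist_eq_norm y ζ).trans_le ((norm_sub_le_of_mem_rectangle hζ hy).trans hlt.le)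
        · exact (mem_ball.1 hζx).le
      _ = 3 * r := by ring
  · calc ‖rectIntegral f z' w'‖ ≤ 4 * M * ‖w' - z'‖ :=
          norm_rectIntegral_le fun y hy ↦ hM y (hsub hy)
      _ ≤ 4 * M * (‖w' - z'‖ * (‖w' - z'‖ / r)) := by
        gcongr
        exact le_mul_of_one_le_right (norm_nonneg _) ((one_le_div₀ hr).2 hr_le)
      _ = 4 * (M / r) * ‖w' - z'‖ ^ 2 := by ring

theorem enorm_rectIntegral_le_coverMeasure (hf : ContinuousOn f (Rectangle z w))
    (hre : (w - z).re ≠ 0) (him : (w - z).im ≠ 0) {E : Set ℂ}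
    (hd : ∀ ζ ∈ Rectangle z w \ E, DifferentiableWithinAt ℂ f (Rectangle z w) ζ)
    {M : ℝ≥0} (hM : ∀ ζ ∈ Rectangle z w, ‖f ζ‖ ≤ M) {ε : ℝ≥0} (hε : 0 < ε)
    {x : ℕ → ℂ} {r : ℕ → ℝ≥0} (hr : ∀ j, 0 < r j) (hrzw : ∀ j, r j ≤ ‖w - z‖)
    (hE : E ⊆ ⋃ j, ball (x j) (r j)) :
    ‖rectIntegral f z w‖ₑ ≤
      4 * ENNReal.ofReal (rectEccentricity z w) * coverMeasure ε M x r (rectIoc z w) := by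
  refine enorm_rectIntegral_le_measure_rectIoc hf
    ((4 * ENNReal.ofReal (rectEccentricity z w)) • coverMeasure ε M x r) fun ζ hζ ↦ ?_
  by_cases hζE : ζ ∈ E
  · obtain ⟨j, hj⟩ := mem_iUnion.1 (hE hζE)
    obtain ⟨n, hn⟩ := exists_scale_norm_rectIntegral_le_of_mem_ball hM (hr j) (hrzw j) hj
    refine ⟨n, fun z' w' hsub hζ' hdiag ↦ ?_⟩
    obtain ⟨hball, hK⟩ := hn z' w' hsub hζ' hdiag
    refine (enorm_rectIntegral_le_of_norm_le_sq (K := M / r j) hre him (c := 2 ^ n) (by positivity)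
      (by simpa using hdiag) (by simpa using hK)).trans ?_
    exact mul_le_mul_right
      (div_mul_volume_le_coverMeasure ((rectIoc_subset_rectangle z' w').trans hball)) _
  · obtain ⟨n, hn⟩ := exists_scale_norm_rectIntegral_le_of_differentiableWithinAt hf
      (hd ζ ⟨hζ, hζE⟩) (NNReal.coe_pos.2 hε)
    refine ⟨n, fun z' w' hsub hζ' hdiag ↦ ?_⟩
    refine (enorm_rectIntegral_le_of_norm_le_sq (K := ε) hre him (c := 2 ^ n) (by positivity)
      (by simpa using hdiag) (hn z' w' hsub hζ' hdiag)).trans ?_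
    exact mul_le_mul_right (mul_volume_le_coverMeasure _) _

theorem enorm_rectIntegral_le_mul_of_hausdorffMeasure_one_eq_zero {E : Set ℂ} (hE : μH[1] E = 0)
    (hre : (w - z).re ≠ 0) (him : (w - z).im ≠ 0) (hf : ContinuousOn f (Rectangle z w))
    (hd : ∀ ζ ∈ Rectangle z w \ E, DifferentiableWithinAt ℂ f (Rectangle z w) ζ)
    {M : ℝ≥0} (hM : ∀ ζ ∈ Rectangle z w, ‖f ζ‖ ≤ M) {ε : ℝ≥0} (hε : 0 < ε) :
    ‖rectIntegral f z w‖ₑ ≤ ε * (4 * ENNReal.ofReal (rectEccentricity z w) *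
      (volume (rectIoc z w) + 9 * NNReal.pi * M)) := by
  have hzw : 0 < ‖w - z‖ₑ := enorm_pos.2 fun h ↦ hre (by rw [h, zero_re])
  obtain ⟨x, r, hr, hsum, hcover⟩ := exists_ball_cover_of_hausdorffMeasure_one_eq_zero hE
    (lt_min (ENNReal.coe_pos.2 hε) hzw).ne'
  have hrzw (j : ℕ) : r j ≤ ‖w - z‖ := by
    have hle : (r j : ℝ≥0∞) ≤ ‖w - z‖ₑ := (ENNReal.le_tsum j).trans (hsum.trans (min_le_right _ _))
    exact_mod_cast ENNReal.coe_le_coe.1 hle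
  calc ‖rectIntegral f z w‖ₑ
      ≤ 4 * ENNReal.ofReal (rectEccentricity z w) * coverMeasure ε M x r (rectIoc z w) :=
        enorm_rectIntegral_le_coverMeasure hf hre him hd hM hε hr hrzw hcover
    _ ≤ 4 * ENNReal.ofReal (rectEccentricity z w) *
          (ε * volume (rectIoc z w) + 9 * NNReal.pi * M * ε) := by
        grw [coverMeasure_apply_le hr (measurableSet_rectIoc z w), hsum, min_le_left]
    _ = _ := by ring

theorem rectIntegral_eq_zero_of_re_eq (h : z.re = w.re) : rectIntegral f z w = 0 := by
  simp [rectIntegral, wedgeIntegral_add_wedgeIntegral_eq, h]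

theorem rectIntegral_eq_zero_of_im_eq (h : z.im = w.im) : rectIntegral f z w = 0 := by
  simp [rectIntegral, wedgeIntegral_add_wedgeIntegral_eq, h]

theorem rectIntegral_eq_zero_of_hausdorffMeasure_one_eq_zero {E : Set ℂ} (hE : μH[1] E = 0)
    (hf : ContinuousOn f (Rectangle z w))
    (hd : ∀ ζ ∈ Rectangle z w \ E, DifferentiableWithinAt ℂ f (Rectangle z w) ζ) :
    rectIntegral f z w = 0 := by
  rcases eq_or_ne (w - z).re 0 with hre | hre
  · exact rectIntegral_eq_zero_of_re_eq (sub_eq_zero.1 hre).symm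
  rcases eq_or_ne (w - z).im 0 with him | him
  · exact rectIntegral_eq_zero_of_im_eq (sub_eq_zero.1 him).symm
  obtain ⟨M, hM⟩ := (isCompact_rectangle z w).exists_bound_of_continuousOn hf
  have hM' : ∀ ζ ∈ Rectangle z w, ‖f ζ‖ ≤ M.toNNReal := fun ζ hζ ↦
    (hM ζ hζ).trans (Real.le_coe_toNNReal M)
  have hvol : volume (rectIoc z w) ≠ ∞ := volume_rectIoc z w ▸ ENNReal.ofReal_ne_top
  by_contra hne
  obtain ⟨ε, hε, hlt⟩ := ENNReal.exists_nnreal_pos_mul_lt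
    (a := 4 * ENNReal.ofReal (rectEccentricity z w) *
      (volume (rectIoc z w) + 9 * NNReal.pi * M.toNNReal)) (by finiteness) (enorm_ne_zero.2 hne)
  exact hlt.not_ge
    (enorm_rectIntegral_le_mul_of_hausdorffMeasure_one_eq_zero hE hre him hf hd hM' hε)

theorem stmt_10_general [CompleteSpace F] {U E : Set ℂ} (hU : IsOpen U) (hE : μH[1] E = 0)
    (hf : ContinuousOn f U) (hd : DifferentiableOn ℂ f (U \ E)) : DifferentiableOn ℂ f U := by
  have hdense : Dense Eᶜ :=
    dense_compl_of_hausdorffMeasure_eq_zero (d := 1) (by simp [finrank_real_complex]) (by simpa)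
  have hdU : ∀ ζ ∈ U \ E, DifferentiableWithinAt ℂ f U ζ := fun ζ hζ ↦
    (hasFDerivWithinAt_of_subset_closure sdiff_subset (hdense.open_subset_closure_inter hU) hf
      (hd ζ hζ).hasFDerivWithinAt).differentiableWithinAt
  refine ((isConservativeOn_and_continuousOn_iff_isDifferentiableOn hU).1
    ⟨fun z w hzw ↦ add_eq_zero_iff_eq_neg.1 ?_, hf⟩)
  exact rectIntegral_eq_zero_of_hausdorffMeasure_one_eq_zero hE (hf.mono hzw)
    fun ζ hζ ↦ (hdU ζ ⟨hzw hζ.1, hζ.2⟩).mono hzw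

end Removability

/-- Sets of zero one-dimensional Hausdorff measure are removable for continuous
functions holomorphic off the set. -/
theorem stmt_10 (U : Set ℂ) (hU : IsOpen U) (E : Set ℂ)
    (hE : MeasureTheory.Measure.hausdorffMeasure 1 E = 0) (f : ℂ → ℂ)
    (hf : ContinuousOn f U)
    (hd : DifferentiableOn ℂ f (U \ E)) :
    DifferentiableOn ℂ f U :=
  stmt_10_general hU hE hf hd
end

section
/- Let φ : ℂ → ℂ be continuously differentiable in the real sense (C¹ as a function of two real variables) with compact support, and define the Cauchy transform u : ℂ → ℂ by u(z) = (1/π) ∫_ℂ φ(w)/(z − w) dA(w), where dA is Lebesgue measure on ℂ ≅ ℝ². Then u is real differentiable at every point z ∈ ℂ and satisfies the ∂̄-equation: (Du(z))(1) + i·(Du(z))(i) = 2·φ(z) for all z ∈ ℂ, where Du(z) denotes the real Fréchet derivative of u at z. -/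
open MeasureTheory

/-!
Let `T` be convolution with the locally integrable kernel `(π w)⁻¹`. The derivative of a
convolution falls on the smooth factor, so `D (T φ) = T (Dφ)`, and since `T` commutes with
`ℂ`-linear maps, `∂̄ (T φ) = T (∂̄ φ)`. That `T (∂̄ φ) = φ` is the Cauchy–Pompeiu formula for
compact supports: in polar coordinates around `z`, the Jacobian cancels the modulus of the kernel
and `-2 e^{-iθ} ∂̄ φ` becomes `-(∂_r φ + (i / r) ∂_θ φ)`. The radial part integrates to `φ z` along
every ray, the angular part to `0` over every circle.
-/

open Set Complex ComplexConjugate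
open scoped Real

section PolarCoordinates

lemma polarCoord_symm_eq_circleMap (p : ℝ × ℝ) :
    Complex.polarCoord.symm p = circleMap 0 p.1 p.2 := by
  simp [circleMap_zero, exp_mul_I]

lemma circleMap_eq_add_smul (z : ℂ) (r θ : ℝ) :
    circleMap z r θ = z + r • circleMap 0 1 θ := by
  simp [circleMap]

variable {F : Type*} [NormedAddCommGroup F]

lemma integrableOn_polarCoord_target {g : ℝ × ℝ → F} (hg : Continuous g) {R : ℝ}
    (hR : ∀ r θ, R ≤ r → g (r, θ) = 0) : IntegrableOn g polarCoord.target := by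
  have hK : IsCompact (Icc 0 R ×ˢ Icc (-π) π) := isCompact_Icc.prod isCompact_Icc
  refine (hg.continuousOn.integrableOn_compact hK).of_forall_sdiff_eq_zero
    polarCoord.open_target.measurableSet ?_
  rintro ⟨r, θ⟩ ⟨⟨hr, hθ⟩, hrθ⟩
  exact hR r θ (le_of_not_ge fun hrR => hrθ ⟨⟨le_of_lt hr, hrR⟩, Ioo_subset_Icc_self hθ⟩)

lemma exists_forall_ge_circleMap_eq_zero {f : ℂ → F} (hf : HasCompactSupport f) (z : ℂ) :
    ∃ R, ∀ r θ, R ≤ r → f (circleMap z r θ) = 0 := by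
  obtain ⟨R, -, hR⟩ := (hf.comp_homeomorph (Homeomorph.addLeft z)).exists_pos_le_norm
  refine ⟨R, fun r θ hr => ?_⟩
  have := hR (circleMap 0 r θ) (by simpa using hr.trans (le_abs_self r))
  simpa [circleMap] using this

variable [NormedSpace ℝ F]

lemma integrableOn_clm_circleMap_apply {g : ℂ → ℂ →L[ℝ] F} (hg : Continuous g)
    (hsupp : HasCompactSupport g) (z : ℂ) {v : ℝ → ℂ} (hv : Continuous v) :
    IntegrableOn (fun p : ℝ × ℝ => g (circleMap z p.1 p.2) (v p.2)) polarCoord.target := by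
  obtain ⟨R, hR⟩ := exists_forall_ge_circleMap_eq_zero hsupp z
  have hcont : Continuous fun p : ℝ × ℝ => circleMap z p.1 p.2 := by
    unfold circleMap
    fun_prop
  refine integrableOn_polarCoord_target (R := R) ((hg.comp hcont).clm_apply (by fun_prop))
    fun r θ hr => ?_
  simp [hR r θ hr]

variable [CompleteSpace F]

lemma integral_Ioi_fderiv_ray {G : Type*} [NormedAddCommGroup G] [NormedSpace ℝ G] {f : G → F}
    (hf : ContDiff ℝ 1 f) (hsupp : HasCompactSupport f) (z : G) {v : G} (hv : v ≠ 0) :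
    ∫ r in Ioi (0 : ℝ), fderiv ℝ f (z + r • v) v = -f z := by
  have hderiv (r : ℝ) : deriv (fun r : ℝ => f (z + r • v)) r = fderiv ℝ f (z + r • v) v := by
    have hray : HasDerivAt (fun r : ℝ => z + r • v) v r := by
      simpa using ((hasDerivAt_id r).smul_const v).const_add z
    exact ((hf.differentiable one_ne_zero _).hasFDerivAt.comp_hasDerivAt r hray).deriv
  have hray : Topology.IsClosedEmbedding fun r : ℝ => z + r • v :=
    (Homeomorph.addLeft z).isClosedEmbedding.comp (isClosedEmbedding_smul_left hv)
  have hFTC := (hsupp.comp_isClosedEmbedding hray).integral_Ioi_deriv_eq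
    (hf.comp (by fun_prop)) 0
  simpa [Function.comp_def, hderiv] using hFTC

lemma integral_fderiv_circleMap_eq_zero {f : ℂ → F} (hf : ContDiff ℝ 1 f) (z : ℂ) (r a : ℝ) :
    ∫ θ in a..a + 2 * π, fderiv ℝ f (circleMap z r θ) (circleMap 0 r θ * I) = 0 := by
  have hderiv (θ : ℝ) : HasDerivAt (fun θ => f (circleMap z r θ))
      (fderiv ℝ f (circleMap z r θ) (circleMap 0 r θ * I)) θ :=
    (hf.differentiable one_ne_zero _).hasFDerivAt.comp_hasDerivAt θ (hasDerivAt_circleMap z r θ)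
  have hcont : Continuous fun θ => fderiv ℝ f (circleMap z r θ) (circleMap 0 r θ * I) :=
    ((hf.continuous_fderiv one_ne_zero).comp (by fun_prop)).clm_apply (by fun_prop)
  rw [intervalIntegral.integral_eq_sub_of_hasDerivAt (fun θ _ => hderiv θ)
    (hcont.intervalIntegrable _ _), periodic_circleMap z r a, sub_self]

lemma integral_polarCoord_target_fderiv_radial {f : ℂ → F} (hf : ContDiff ℝ 1 f)
    (hsupp : HasCompactSupport f) (z : ℂ) :
    ∫ p in polarCoord.target, fderiv ℝ f (circleMap z p.1 p.2) (circleMap 0 1 p.2) =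
      -(2 * π) • f z := by
  have hint := integrableOn_clm_circleMap_apply (hf.continuous_fderiv one_ne_zero)
    (hsupp.fderiv ℝ) z (continuous_circleMap 0 1)
  rw [polarCoord_target, Measure.volume_eq_prod] at hint ⊢
  have hray (θ : ℝ) :
      ∫ r in Ioi (0 : ℝ), fderiv ℝ f (circleMap z r θ) (circleMap 0 1 θ) = -f z := by
    simp_rw [circleMap_eq_add_smul z]
    exact integral_Ioi_fderiv_ray hf hsupp z (circleMap_ne_center one_ne_zero)
  rw [← setIntegral_prod_swap]
  refine (setIntegral_prod _ hint.swap).trans ?_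
  simp only [Function.comp_apply, Prod.swap_prod_mk, hray, setIntegral_const, measureReal_def,
    Real.volume_Ioo, sub_neg_eq_add, ← two_mul, ENNReal.toReal_ofReal Real.two_pi_pos.le,
    smul_neg, neg_smul]

lemma integral_polarCoord_target_fderiv_angular {f : ℂ → F} (hf : ContDiff ℝ 1 f)
    (hsupp : HasCompactSupport f) (z : ℂ) :
    ∫ p in polarCoord.target, fderiv ℝ f (circleMap z p.1 p.2) (circleMap 0 1 p.2 * I) = 0 := by
  have hint := integrableOn_clm_circleMap_apply (hf.continuous_fderiv one_ne_zero)
    (hsupp.fderiv ℝ) z ((continuous_circleMap 0 1).mul_const I)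
  rw [polarCoord_target, Measure.volume_eq_prod] at hint ⊢
  rw [setIntegral_prod _ hint]
  refine setIntegral_eq_zero_of_forall_eq_zero fun r (hr : 0 < r) => ?_
  have hcircle := integral_fderiv_circleMap_eq_zero hf z r (-π)
  have hscale (θ : ℝ) : circleMap 0 r θ * I = r • (circleMap 0 1 θ * I) := by
    simp [circleMap, mul_assoc]
  simp only [hscale, map_smul, intervalIntegral.integral_smul] at hcircle
  rw [← integral_Ioc_eq_integral_Ioo, ← intervalIntegral.integral_of_le (by linarith [Real.pi_pos])]
  simpa [hr.ne', two_mul] using hcircle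

end PolarCoordinates

section Dbar

variable {E : Type*} [NormedAddCommGroup E] [NormedSpace ℂ E]

/-- The coefficient `b` in the decomposition `L w = a w + b (conj w)` of a real linear map on `ℂ`,
which vanishes exactly when `L` is complex linear. It is bundled as a continuous
`ℂ`-linear function of `L` so that it commutes with the Cauchy transform. -/
noncomputable def antilinearCoeff : (ℂ →L[ℝ] E) →L[ℂ] E where
  toFun L := (2 : ℂ)⁻¹ • (L 1 + I • L I)
  map_add' L M := by simp only [add_apply]; module
  map_smul' c L := by simp only [smul_apply, RingHom.id_apply]; module
  cont := by fun_prop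

lemma antilinearCoeff_apply (L : ℂ →L[ℝ] E) :
    antilinearCoeff L = (2 : ℂ)⁻¹ • (L 1 + I • L I) := rfl

lemma conj_smul_antilinearCoeff (L : ℂ →L[ℝ] E) (w : ℂ) :
    conj w • antilinearCoeff L = (2 : ℂ)⁻¹ • (L w + I • L (w * I)) := by
  have hL (a b : ℝ) : L (a + b * I) = (a : ℂ) • L 1 + (b : ℂ) • L I := by
    rw [coe_smul, coe_smul, ← map_smul, ← map_smul, ← map_add]
    simp
  have hw : w = w.re + w.im * I := (re_add_im w).symm
  have hwI : w * I = (-w.im : ℝ) + w.re * I := by apply Complex.ext <;> simp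
  have hconj : conj w = w.re - w.im * I := by apply Complex.ext <;> simp
  have hLw : L w = (w.re : ℂ) • L 1 + (w.im : ℂ) • L I := by rw [← hL, ← hw]
  rw [hLw, hwI, hL, hconj, antilinearCoeff_apply, ofReal_neg]
  linear_combination (norm := module) (-(w.im : ℂ) / 2) • I_mul_I • L I

/-- The Cauchy–Riemann operator `∂̄ = (∂/∂x + i ∂/∂y) / 2`, with value `0` where `f` is not real
differentiable. -/
noncomputable def dbar (f : ℂ → E) (z : ℂ) : E :=
  antilinearCoeff (fderiv ℝ f z)

lemma smul_inv_smul_dbar_circleMap (f : ℂ → E) (z : ℂ) {r : ℝ} (hr : r ≠ 0) (θ : ℝ) :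
    r • (circleMap 0 r θ)⁻¹ • dbar f (circleMap z r θ) =
      (2 : ℂ)⁻¹ • (fderiv ℝ f (circleMap z r θ) (circleMap 0 1 θ) +
        I • fderiv ℝ f (circleMap z r θ) (circleMap 0 1 θ * I)) := by
  have hconj : (r : ℂ) * (circleMap 0 r θ)⁻¹ = conj (circleMap 0 1 θ) := by
    have : (r : ℂ) ≠ 0 := ofReal_ne_zero.mpr hr
    rw [circleMap_zero_inv, conj_circleMap_zero, circleMap_zero, circleMap_zero, ofReal_inv,
      mul_inv_cancel_left₀ this, ofReal_one, one_mul]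
  rw [← coe_smul, smul_smul, hconj, dbar, conj_smul_antilinearCoeff]

lemma integral_inv_smul_dbar [CompleteSpace E] {f : ℂ → E} (hf : ContDiff ℝ 1 f)
    (hsupp : HasCompactSupport f) (z : ℂ) :
    ∫ w : ℂ, w⁻¹ • dbar f (z + w) = -(π : ℂ) • f z := by
  have hradial := integrableOn_clm_circleMap_apply (hf.continuous_fderiv one_ne_zero)
    (hsupp.fderiv ℝ) z (continuous_circleMap 0 1)
  have hangular := integrableOn_clm_circleMap_apply (hf.continuous_fderiv one_ne_zero)
    (hsupp.fderiv ℝ) z ((continuous_circleMap 0 1).mul_const I)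
  have hpolar : ∀ p ∈ polarCoord.target,
      p.1 • (Complex.polarCoord.symm p)⁻¹ • dbar f (z + Complex.polarCoord.symm p) =
        (2 : ℂ)⁻¹ • (fderiv ℝ f (circleMap z p.1 p.2) (circleMap 0 1 p.2) +
          I • fderiv ℝ f (circleMap z p.1 p.2) (circleMap 0 1 p.2 * I)) := by
    rintro ⟨r, θ⟩ ⟨hr : 0 < r, -⟩
    rw [← smul_inv_smul_dbar_circleMap f z hr.ne', polarCoord_symm_eq_circleMap]
    simp [circleMap]
  calc
    ∫ w : ℂ, w⁻¹ • dbar f (z + w)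
    _ = ∫ p in polarCoord.target,
          (2 : ℂ)⁻¹ • (fderiv ℝ f (circleMap z p.1 p.2) (circleMap 0 1 p.2) +
            I • fderiv ℝ f (circleMap z p.1 p.2) (circleMap 0 1 p.2 * I)) := by
      rw [← Complex.integral_comp_polarCoord_symm,
        setIntegral_congr_fun polarCoord.open_target.measurableSet hpolar]
    _ = (2 : ℂ)⁻¹ • (-(2 * π) • f z + I • (0 : E)) := by
      rw [integral_smul, integral_add hradial (hangular.fun_smul I), integral_smul,
        integral_polarCoord_target_fderiv_radial hf hsupp,
        integral_polarCoord_target_fderiv_angular hf hsupp]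
    _ = -(π : ℂ) • f z := by
      rw [← coe_smul]
      push_cast
      module

end Dbar

section CauchyTransform

variable {E : Type*} [NormedAddCommGroup E] [NormedSpace ℂ E]

/-- The Cauchy transform `z ↦ π⁻¹ ∫ f(w) / (z - w) dA(w)` of a vector-valued function,
which inverts `∂̄`. The value is `0` where the integrand is not integrable. -/
noncomputable def cauchyTransform (f : ℂ → E) (z : ℂ) : E :=
  (π : ℂ)⁻¹ • ∫ w : ℂ, (z - w)⁻¹ • f w

lemma locallyIntegrable_complex_inv : LocallyIntegrable fun w : ℂ => w⁻¹ :=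
  locallyIntegrable_of_norm_le_rpow (C := 1) (α := 1) (by simp) (by simp)
    (.of_forall fun w => by simp [Real.rpow_neg_one]) measurable_inv.aestronglyMeasurable

lemma integrable_cauchyKernel_smul {f : ℂ → E} (hf : Continuous f) (hsupp : HasCompactSupport f)
    (z : ℂ) : Integrable fun w : ℂ => (z - w)⁻¹ • f w := by
  have hint : Integrable fun w : ℂ => w⁻¹ • f (z - w) :=
    locallyIntegrable_complex_inv.integrable_smul_right_of_hasCompactSupport (by fun_prop)
      (hsupp.comp_homeomorph (Homeomorph.subLeft z))
  simpa using hint.comp_sub_left z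

lemma cauchyTransform_eq_convolution (f : ℂ → E) (z : ℂ) :
    cauchyTransform f z = (π : ℂ)⁻¹ •
      convolution (fun w : ℂ => w⁻¹) f (ContinuousLinearMap.lsmul ℝ ℂ) volume z := by
  rw [cauchyTransform, convolution_def, ← integral_sub_left_eq_self _ volume z]
  simp

lemma clm_apply_cauchyTransform {F : Type*} [NormedAddCommGroup F] [NormedSpace ℂ F]
    [CompleteSpace E] [CompleteSpace F] (A : E →L[ℂ] F) {f : ℂ → E} {z : ℂ}
    (hf : Integrable fun w : ℂ => (z - w)⁻¹ • f w) :
    A (cauchyTransform f z) = cauchyTransform (fun w => A (f w)) z := by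
  simp only [cauchyTransform, map_smul, ← A.integral_comp_comm hf]

lemma hasFDerivAt_cauchyTransform {f : ℂ → E} (hf : ContDiff ℝ 1 f) (hsupp : HasCompactSupport f)
    (z : ℂ) : HasFDerivAt (cauchyTransform f) (cauchyTransform (fderiv ℝ f) z) z := by
  have hprecomp : (ContinuousLinearMap.lsmul ℝ ℂ : ℂ →L[ℝ] E →L[ℝ] E).precompR ℂ =
      ContinuousLinearMap.lsmul ℝ ℂ := by
    ext; rfl
  have hconv := (hsupp.hasFDerivAt_convolution_right (ContinuousLinearMap.lsmul ℝ ℂ)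
    locallyIntegrable_complex_inv hf z).const_smul (π : ℂ)⁻¹
  rw [hprecomp, ← cauchyTransform_eq_convolution] at hconv
  exact hconv.congr_of_eventuallyEq (.of_forall (cauchyTransform_eq_convolution f))

variable [CompleteSpace E]

theorem dbar_cauchyTransform {f : ℂ → E} (hf : ContDiff ℝ 1 f) (hsupp : HasCompactSupport f)
    (z : ℂ) : dbar (cauchyTransform f) z = cauchyTransform (dbar f) z := by
  rw [dbar, (hasFDerivAt_cauchyTransform hf hsupp z).fderiv]
  exact clm_apply_cauchyTransform _
    (integrable_cauchyKernel_smul (hf.continuous_fderiv one_ne_zero) (hsupp.fderiv ℝ) z)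

theorem cauchyTransform_dbar {f : ℂ → E} (hf : ContDiff ℝ 1 f) (hsupp : HasCompactSupport f)
    (z : ℂ) : cauchyTransform (dbar f) z = f z := by
  have hpi : (π : ℂ) ≠ 0 := ofReal_ne_zero.mpr Real.pi_ne_zero
  rw [cauchyTransform, ← integral_add_left_eq_self _ z]
  simp only [sub_add_cancel_left, inv_neg, neg_smul, integral_neg,
    integral_inv_smul_dbar hf hsupp, neg_neg, inv_smul_smul₀ hpi]

end CauchyTransform

theorem stmt_12_general {E : Type*} [NormedAddCommGroup E] [NormedSpace ℂ E] [CompleteSpace E]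
    (φ : ℂ → E) (hφ : ContDiff ℝ 1 φ) (hsupp : HasCompactSupport φ) (u : ℂ → E)
    (hu : ∀ z : ℂ, u z = (π : ℂ)⁻¹ • ∫ w : ℂ, (z - w)⁻¹ • φ w) (z : ℂ) :
    ∃ D : ℂ →L[ℝ] E, HasFDerivAt u D z ∧ D 1 + I • D I = (2 : ℂ) • φ z := by
  obtain rfl : u = cauchyTransform φ := funext hu
  have hD := hasFDerivAt_cauchyTransform hφ hsupp z
  have hdbar := (dbar_cauchyTransform hφ hsupp z).trans (cauchyTransform_dbar hφ hsupp z)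
  rw [dbar, hD.fderiv, antilinearCoeff_apply, inv_smul_eq_iff₀ two_ne_zero] at hdbar
  exact ⟨_, hD, hdbar⟩

/-- The Cauchy transform `u(z) = (1/π) ∫ φ(w)/(z-w) dA(w)` of a compactly supported
`C¹` function `φ` is real differentiable everywhere and solves the `∂̄`-equation
`∂̄u = φ`, i.e. `(Du z) 1 + i (Du z) i = 2 φ z`. -/
theorem stmt_12 (φ : ℂ → ℂ) (hφ : ContDiff ℝ 1 φ) (hsupp : HasCompactSupport φ)
    (u : ℂ → ℂ)
    (hu : ∀ z : ℂ, u z = (Real.pi : ℂ)⁻¹ * ∫ w : ℂ, φ w / (z - w) ∂volume) :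
    ∀ z : ℂ, ∃ D : ℂ →L[ℝ] ℂ, HasFDerivAt u D z ∧
      D 1 + Complex.I * D Complex.I = 2 * φ z :=
  stmt_12_general φ hφ hsupp u (by simpa only [div_eq_inv_mul, smul_eq_mul] using hu)
end
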